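/- Fix natural numbers n and ℓ. Then for each d ≤ n there is a finite open covering of the Grassmannian Gr_{n,d}(R) by L-definable sets Θ_ν^d such that for any choice of ℓ of these sets Θ_{ν_1}^{d_1},…,Θ_{ν_ℓ}^{d_ℓ} there exists an orthogonal transformation κ ∈ O_n(ℚ) such that for every i ≤ ℓ and every V ∈ Θ_{ν_i}^{d_i} one has v(J(κV)) ≥ 0. -/

import Mathlib

open FirstOrder Matrix Topology Set
open scoped Classical

noncomputable section

namespace LipStrat

/-- A real closed field: an ordered field in which every nonnegative element is a square and
every polynomial of odd degree has a root. -/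
class IsRealClosed (R : Type*) [Field R] [LinearOrder R] [IsStrictOrderedRing R] : Prop where
  exists_sq : ∀ x : R, 0 ≤ x → ∃ y : R, y ^ 2 = x
  exists_root : ∀ p : Polynomial R, Odd p.natDegree → ∃ x : R, p.eval x = 0

variable {R : Type*} [Field R] [LinearOrder R] [IsStrictOrderedRing R] [IsRealClosed R]

theorem exists_enorm {ι : Type*} [Fintype ι] (x : ι → R) :
    ∃ y : R, 0 ≤ y ∧ y ^ 2 = ∑ i, x i ^ 2 := by
  obtain ⟨y, hy⟩ := IsRealClosed.exists_sq (∑ i, x i ^ 2)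
    (Finset.sum_nonneg fun i _ => sq_nonneg _)
  exact ⟨|y|, abs_nonneg y, by rwa [sq_abs]⟩

/-- The euclidean norm of a vector over a real closed field. -/
def enorm {ι : Type*} [Fintype ι] (x : ι → R) : R := (exists_enorm x).choose

/-- The distance from a point to a set: the infimum (if it exists) of euclidean distances. -/
def infDist {ι : Type*} [Fintype ι] (a : ι → R) (X : Set (ι → R)) : R :=
  if h : ∃ r : R, IsGLB ((fun x => enorm (a - x)) '' X) r then h.choose else 0

/-- The operator norm of a matrix: the supremum (if it exists) of `‖M x‖` over `‖x‖ = 1`. -/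
def opNorm {k l : ℕ} (M : Matrix (Fin k) (Fin l) R) : R :=
  if h : ∃ r : R, IsLUB ((fun x => enorm (M.mulVec x)) '' {x | enorm x = 1}) r then h.choose
  else 0

end LipStrat
section MT

open FirstOrder

namespace LipStrat

variable {R : Type*} [Field R] [LinearOrder R] [IsStrictOrderedRing R] [IsRealClosed R]
variable (L : FirstOrder.Language) [L.Structure R]

/-- The graph of a function `R^k → R^l`, as a subset of a finite cartesian power of `R`. -/
def graphSet {k l : ℕ} (f : (Fin k → R) → Fin l → R) : Set ((Fin k ⊕ Fin l) → R) :=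
  {v | f (v ∘ Sum.inl) = v ∘ Sum.inr}

/-- A function `R^k → R^l` is definable with parameters in `A` if its graph is. -/
def DefFun (A : Set R) {k l : ℕ} (f : (Fin k → R) → Fin l → R) : Prop :=
  Set.Definable A L (graphSet f)

/-- A scalar-valued function `R^k → R` is definable with parameters in `A` if its graph is. -/
def DefFun₁ (A : Set R) {k : ℕ} (f : (Fin k → R) → R) : Prop :=
  DefFun L A (fun x => fun _ : Fin 1 => f x)

variable [TopologicalSpace R] [OrderTopology R]

/-- `R` (with the order topology) is o-minimal as an `L`-structure: every subset of `R`
definable with arbitrary parameters is a finite union of points and open intervals;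
equivalently (in a dense linear order), its topological frontier is finite. -/
def IsOMinimal : Prop :=
  ∀ s : Set R, Set.Definable (Set.univ : Set R) L {v : Fin 1 → R | v 0 ∈ s} →
    (frontier s).Finite

/-- The language `L` expands the (ordered) ring language: the graphs of addition and
multiplication and the order relation are `∅`-definable. -/
structure ExpandsOrderedRing : Prop where
  add_def : Set.Definable (∅ : Set R) L {v : Fin 3 → R | v 0 + v 1 = v 2}
  mul_def : Set.Definable (∅ : Set R) L {v : Fin 3 → R | v 0 * v 1 = v 2}
  lt_def : Set.Definable (∅ : Set R) L {v : Fin 2 → R | v 0 < v 1}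

/-- `R` is power-bounded: every definable function `R → R` is eventually bounded in absolute
value by a definable endomorphism of the multiplicative group `R^×` (a "power function"). -/
def IsPowerBounded : Prop :=
  ∀ f : R → R, DefFun₁ L (Set.univ : Set R) (fun v : Fin 1 → R => f (v 0)) →
    ∃ g : R → R, DefFun₁ L (Set.univ : Set R) (fun v : Fin 1 → R => g (v 0)) ∧
      (∀ x y : R, x ≠ 0 → y ≠ 0 → g (x * y) = g x * g y) ∧
      (∀ x : R, x ≠ 0 → g x ≠ 0) ∧
      ∃ x₀ : R, ∀ x : R, x₀ ≤ x → |f x| ≤ g x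

/-- The o-minimal dimension of a subset of `R^n`: the largest `d` such that some projection
to `d` coordinates has nonempty interior. -/
def odim {n : ℕ} (s : Set (Fin n → R)) : ℕ :=
  sSup {d | ∃ f : Fin d → Fin n, Function.Injective f ∧
    (interior ((fun x : Fin n → R => x ∘ f) '' s)).Nonempty}

end LipStrat

end MT
section Calc

namespace LipStrat

open Matrix

variable {R : Type*} [Field R] [LinearOrder R] [IsStrictOrderedRing R] [IsRealClosed R]

/-- `f` has (total) derivative given by the matrix `J` at the point `a`. -/
def HasDerivAtPt {k l : ℕ} (f : (Fin k → R) → Fin l → R) (J : Fin l → Fin k → R)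
    (a : Fin k → R) : Prop :=
  ∀ ε : R, 0 < ε → ∃ δ : R, 0 < δ ∧ ∀ x : Fin k → R, enorm (x - a) < δ →
    enorm (fun i => f x i - f a i - ∑ j, J i j * (x j - a j)) ≤ ε * enorm (x - a)

/-- `f` has gradient `g` at `a` (scalar-valued version). -/
def HasGradAtPt {k : ℕ} (f : (Fin k → R) → R) (g : Fin k → R) (a : Fin k → R) : Prop :=
  ∀ ε : R, 0 < ε → ∃ δ : R, 0 < δ ∧ ∀ x : Fin k → R, enorm (x - a) < δ →
    |f x - f a - ∑ j, g j * (x j - a j)| ≤ ε * enorm (x - a)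

variable [TopologicalSpace R] [OrderTopology R]

/-- `f` is C¹ on `U`, with Jacobian matrix function `J` (continuous on `U`). -/
def IsC1On {k l : ℕ} (f : (Fin k → R) → Fin l → R) (U : Set (Fin k → R))
    (J : (Fin k → R) → Fin l → Fin k → R) : Prop :=
  (∀ a ∈ U, HasDerivAtPt f (J a) a) ∧ ContinuousOn J U

/-- `f` is C¹ on `U` (scalar version), with gradient function `g` (continuous on `U`). -/
def IsC1ScalarOn {k : ℕ} (f : (Fin k → R) → R) (U : Set (Fin k → R))
    (g : (Fin k → R) → Fin k → R) : Prop :=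
  (∀ a ∈ U, HasGradAtPt f (g a) a) ∧ ContinuousOn g U

variable (L : FirstOrder.Language) [L.Structure R]

/-- `(U, V, ψ, J)` is a definable C¹ parametrization (chart) of a relatively open piece `U` of
`S ⊆ R^n` by an open set `V ⊆ R^d`: `ψ` is a definable C¹ immersion mapping `V` bijectively
and bi-continuously onto `U`. -/
def IsC1Param (A : Set R) {n d : ℕ} (S : Set (Fin n → R)) (U : Set (Fin n → R))
    (V : Set (Fin d → R)) (ψ : (Fin d → R) → Fin n → R)
    (J : (Fin d → R) → Fin n → Fin d → R) : Prop :=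
  IsOpen V ∧ (∃ W : Set (Fin n → R), IsOpen W ∧ U = S ∩ W) ∧
  Set.Definable A L V ∧ Set.Definable A L U ∧ DefFun L A ψ ∧
  IsC1On ψ V J ∧ Set.InjOn ψ V ∧ ψ '' V = U ∧
  (∀ x ∈ V, LinearIndependent R (fun j : Fin d => fun i : Fin n => J x i j)) ∧
  (∀ V' ⊆ V, IsOpen V' → ∃ W : Set (Fin n → R), IsOpen W ∧ ψ '' V' = U ∩ W)

/-- `S ⊆ R^n` is a definable C¹ submanifold of dimension `d`: it admits a finite cover by
definable C¹ charts. -/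
def IsDefC1Manifold (A : Set R) {n : ℕ} (S : Set (Fin n → R)) (d : ℕ) : Prop :=
  ∃ (N : ℕ) (U : Fin N → Set (Fin n → R)) (V : Fin N → Set (Fin d → R))
    (ψ : Fin N → (Fin d → R) → Fin n → R) (J : Fin N → (Fin d → R) → Fin n → Fin d → R),
    S ⊆ (⋃ i, U i) ∧ ∀ i, IsC1Param L A S (U i) (V i) (ψ i) (J i)

/-- `T` is the tangent space of the `d`-dimensional definable C¹ submanifold `S` at `a ∈ S`:
the span of the columns of the Jacobian of some definable chart at `a`. -/
def IsTangentAt (A : Set R) {n : ℕ} (S : Set (Fin n → R)) (d : ℕ) (a : Fin n → R)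
    (T : Submodule R (Fin n → R)) : Prop :=
  ∃ (U : Set (Fin n → R)) (V : Set (Fin d → R)) (ψ : (Fin d → R) → Fin n → R)
    (J : (Fin d → R) → Fin n → Fin d → R) (x : Fin d → R),
    IsC1Param L A S U V ψ J ∧ x ∈ V ∧ ψ x = a ∧
    T = Submodule.span R (Set.range fun j : Fin d => fun i : Fin n => J x i j)

/-- `P` is the matrix of the orthogonal projection of `R^n` onto the subspace `W`
(with respect to the standard inner product). -/
def IsOrthProjOnto {n : ℕ} (W : Submodule R (Fin n → R)) (P : Matrix (Fin n) (Fin n) R) :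
    Prop :=
  (∀ x : Fin n → R, P.mulVec x ∈ W) ∧ (∀ w ∈ W, P.mulVec w = w) ∧
  (∀ x : Fin n → R, ∀ w ∈ W, (x - P.mulVec x) ⬝ᵥ w = 0)

end LipStrat

end Calc
section Strat

namespace LipStrat

open Matrix

variable {R : Type*} [Field R] [LinearOrder R] [IsStrictOrderedRing R] [IsRealClosed R]
variable [TopologicalSpace R] [OrderTopology R]
variable (L : FirstOrder.Language) [L.Structure R]

/-- `X^{i-1}`, with the convention `X^{-1} = ∅`. -/
def Xlow {n : ℕ} (X' : ℕ → Set (Fin n → R)) (i : ℕ) : Set (Fin n → R) :=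
  if i = 0 then ∅ else X' (i - 1)

/-- The `i`-th skeleton `X̊^i = X^i ∖ X^{i-1}` of a stratification. -/
def skel {n : ℕ} (X' : ℕ → Set (Fin n → R)) (i : ℕ) : Set (Fin n → R) :=
  X' i \ Xlow X' i

/-- `u` is relatively closed in `s`. -/
def RelClosedIn {n : ℕ} (u s : Set (Fin n → R)) : Prop :=
  u ⊆ s ∧ closure u ∩ s ⊆ u

/-- `s` is definably connected: it is not the disjoint union of two nonempty relatively
closed definable subsets. -/
def DefConnected (A : Set R) {n : ℕ} (s : Set (Fin n → R)) : Prop :=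
  ∀ u v : Set (Fin n → R), Set.Definable A L u → Set.Definable A L v →
    RelClosedIn u s → RelClosedIn v s → u ∪ v = s → u ∩ v = ∅ → u = ∅ ∨ v = ∅

/-- `c` is a stratum of the stratification `X'`: a definably connected component of one of
the skeletons. -/
def IsStratum (A : Set R) {n : ℕ} (X' : ℕ → Set (Fin n → R)) (c : Set (Fin n → R)) : Prop :=
  ∃ i : ℕ, c.Nonempty ∧ c ⊆ skel X' i ∧ Set.Definable A L c ∧ DefConnected L A c ∧
    ∀ c' : Set (Fin n → R), c ⊆ c' → c' ⊆ skel X' i → Set.Definable A L c' →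
      DefConnected L A c' → c' = c

/-- `X' = (X^0 ⊆ X^1 ⊆ ⋯ ⊆ X^d = X)` is a definable stratification of the `d`-dimensional
definable set `X ⊆ R^n` (with parameters in `A`). -/
def IsDefStratification (A : Set R) {n : ℕ} (d : ℕ) (X' : ℕ → Set (Fin n → R))
    (X : Set (Fin n → R)) : Prop :=
  (∀ i j : ℕ, i ≤ j → X' i ⊆ X' j) ∧
  (∀ i : ℕ, d ≤ i → X' i = X) ∧
  (∀ i : ℕ, Set.Definable A L (X' i)) ∧
  (∀ i : ℕ, closure (X' i) ∩ X ⊆ X' i) ∧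
  (∀ i : ℕ, odim (X' i) ≤ i) ∧
  (∀ i : ℕ, i ≤ d → skel X' i = ∅ ∨ IsDefC1Manifold L A (skel X' i) i) ∧
  (∀ c c' : Set (Fin n → R), IsStratum L A X' c → IsStratum L A X' c' →
    (c' ∩ closure c).Nonempty → c' ⊆ closure c)

variable {n : ℕ}

/-- Condition (1) on chains: `‖a⁰ - aˡ‖ < c · dist(a⁰, X^{eₗ})`. -/
def chainIneq1 (c : R) (X' : ℕ → Set (Fin n → R)) (a0 al : Fin n → R) (el : ℕ) : Prop :=
  enorm (a0 - al) < c * infDist a0 (X' el)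

/-- `dist(a⁰, X^{i-1}) ≥ C' · dist(a⁰, X^i)` (trivially true if `X^{i-1} = ∅`). -/
def distGeCond (C' : R) (X' : ℕ → Set (Fin n → R)) (a0 : Fin n → R) (i : ℕ) : Prop :=
  Xlow X' i = ∅ ∨ C' * infDist a0 (X' i) ≤ infDist a0 (Xlow X' i)

/-- `dist(a⁰, X^{i-1}) < c' · dist(a⁰, X^i)` (false if `X^{i-1} = ∅`). -/
def distLtCond (c' : R) (X' : ℕ → Set (Fin n → R)) (a0 : Fin n → R) (i : ℕ) : Prop :=
  Xlow X' i ≠ ∅ ∧ infDist a0 (Xlow X' i) < c' * infDist a0 (X' i)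

/-- `a⁰, …, aᵐ` is a plain chain for the constants `(c, c', C')`. -/
def IsPlainChain (c c' C' : R) (X' : ℕ → Set (Fin n → R)) (m : ℕ) (e : ℕ → ℕ)
    (a : ℕ → Fin n → R) : Prop :=
  (∀ l : ℕ, l ≤ m → a l ∈ skel X' (e l)) ∧
  (∀ k l : ℕ, k < l → l ≤ m → e l < e k) ∧
  (∀ l : ℕ, 1 ≤ l → l ≤ m → chainIneq1 c X' (a 0) (a l) (e l)) ∧
  (∀ i : ℕ, e m ≤ i → i < e 0 →
    ((∃ l : ℕ, 1 ≤ l ∧ l ≤ m ∧ e l = i) → distGeCond C' X' (a 0) i) ∧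
    ((¬ ∃ l : ℕ, 1 ≤ l ∧ l ≤ m ∧ e l = i) → distLtCond c' X' (a 0) i))

/-- `a⁰, a¹, …, aᵐ` is an augmented chain for the constants `(c, c', C', C'')`:
`a⁰, a², …, aᵐ` is a plain chain and `a¹` is an extra point in the same skeleton as `a⁰`
with `‖a⁰ - a¹‖ ≤ dist(a⁰, X^{e₁-1})/C''`. -/
def IsAugChain (c c' C' C'' : R) (X' : ℕ → Set (Fin n → R)) (m : ℕ) (e : ℕ → ℕ)
    (a : ℕ → Fin n → R) : Prop :=
  1 ≤ m ∧ e 1 = e 0 ∧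
  (∀ l : ℕ, l ≤ m → a l ∈ skel X' (e l)) ∧
  (∀ k l : ℕ, 1 ≤ k → k < l → l ≤ m → e l < e k) ∧
  (∀ l : ℕ, 2 ≤ l → l ≤ m → chainIneq1 c X' (a 0) (a l) (e l)) ∧
  (∀ i : ℕ, e m ≤ i → i < e 0 →
    ((∃ l : ℕ, 2 ≤ l ∧ l ≤ m ∧ e l = i) → distGeCond C' X' (a 0) i) ∧
    ((¬ ∃ l : ℕ, 2 ≤ l ∧ l ≤ m ∧ e l = i) → distLtCond c' X' (a 0) i)) ∧
  (Xlow X' (e 1) = ∅ ∨ C'' * enorm (a 0 - a 1) ≤ infDist (a 0) (Xlow X' (e 1)))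

/-- `P l` is the orthogonal projection onto the tangent space of the skeleton `X̊^{eₗ}`
at `aˡ`, for `l ≤ m`. -/
def ChainProjs (A : Set R) (X' : ℕ → Set (Fin n → R)) (e : ℕ → ℕ) (a : ℕ → Fin n → R)
    (P : ℕ → Matrix (Fin n) (Fin n) R) (m : ℕ) : Prop :=
  ∀ l : ℕ, l ≤ m → ∃ T : Submodule R (Fin n → R),
    IsTangentAt L A (skel X' (e l)) (e l) (a l) T ∧ IsOrthProjOnto T (P l)

/-- The ordered product `P lo * P (lo+1) * ⋯ * P (lo+len-1)`. -/
def prodP (P : ℕ → Matrix (Fin n) (Fin n) R) (lo len : ℕ) : Matrix (Fin n) (Fin n) R :=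
  ((List.range len).map (fun l => P (lo + l))).prod

/-- The Mostowski inequality `‖Q‖ < C''' ‖a⁰-a¹‖ / dist(a⁰, X^{e_m - 1})`, where the left hand
side is required to be `0` if `X^{e_m-1} = ∅`. -/
def mostowskiIneq (C''' : R) (X' : ℕ → Set (Fin n → R)) (em : ℕ) (a0 a1 : Fin n → R)
    (Q : Matrix (Fin n) (Fin n) R) : Prop :=
  if Xlow X' em = ∅ then Q = 0
  else opNorm Q * infDist a0 (Xlow X' em) < C''' * enorm (a0 - a1)

/-- The stratification `X'` satisfies the Mostowski Conditions for `(c, c', C', C'', C''')`. -/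
def SatisfiesMostowski (A : Set R) (X' : ℕ → Set (Fin n → R)) (c c' C' C'' C''' : R) : Prop :=
  (∀ (m : ℕ) (e : ℕ → ℕ) (a : ℕ → Fin n → R), 1 ≤ m → IsPlainChain c c' C' X' m e a →
    ∀ P : ℕ → Matrix (Fin n) (Fin n) R, ChainProjs L A X' e a P m →
      mostowskiIneq C''' X' (e m) (a 0) (a 1) ((1 - P 0) * prodP P 1 m)) ∧
  (∀ (m : ℕ) (e : ℕ → ℕ) (a : ℕ → Fin n → R), IsAugChain c c' C' C'' X' m e a →
    ∀ P : ℕ → Matrix (Fin n) (Fin n) R, ChainProjs L A X' e a P m →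
      mostowskiIneq C''' X' (e m) (a 0) (a 1) ((P 0 - P 1) * prodP P 2 (m - 1)))

/-- `X'` is a Lipschitz stratification: for every `c > 1` there is `C` such that the
Mostowski Conditions hold for `(c, 2c², 2c², 2c, C)`. -/
def IsLipschitzStrat (A : Set R) (X' : ℕ → Set (Fin n → R)) : Prop :=
  ∀ c : R, 1 < c → ∃ C : R,
    SatisfiesMostowski L A X' c (2 * c ^ 2) (2 * c ^ 2) (2 * c) C

end LipStrat

end Strat
section Val

namespace LipStrat

open Matrix

variable {R : Type*} [Field R] [LinearOrder R] [IsStrictOrderedRing R] [IsRealClosed R]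

/-- The convex closure of a subset `R₀ ⊆ R`: the elements bounded by an element of `R₀`.
When `R₀` is (the carrier of) an elementary substructure, this is a valuation ring `O` of `R`. -/
def convexClosure (R₀ : Set R) : Set R :=
  {a : R | ∃ b ∈ R₀, -b < a ∧ a < b}

/-- `v(x) ≥ v(y)` for the valuation `v` associated to the valuation ring `O`:
`x` is an `O`-multiple of `y`. -/
def vge (O : Set R) (x y : R) : Prop := ∃ u ∈ O, x = u * y

/-- `v(x) > v(y)`. -/
def vgt (O : Set R) (x y : R) : Prop := vge O x y ∧ ¬ vge O y x

/-- `v(x) = v(y)`. -/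
def veq (O : Set R) (x y : R) : Prop := vge O x y ∧ vge O y x

variable {n : ℕ}

/-- `v(s) > v-dist(a₀, X)`, where `v(s) = min_i v(sᵢ)` and
`v-dist(a₀, X) = sup_{x ∈ X} v(a₀ - x) = v(dist(a₀, X))` (`-∞` for `X = ∅`). -/
def vdistLtVec (O : Set R) (s : Fin n → R) (a0 : Fin n → R) (X : Set (Fin n → R)) : Prop :=
  X = ∅ ∨ ∀ i, vgt O (s i) (infDist a0 X)

/-- `v(s) ≥ v-dist(a₀, X)`. -/
def vdistLeVec (O : Set R) (s : Fin n → R) (a0 : Fin n → R) (X : Set (Fin n → R)) : Prop :=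
  X = ∅ ∨ ∀ i, vge O (s i) (infDist a0 X)

/-- `v(s) = v-dist(a₀, X)` (which in particular forces `X ≠ ∅`). -/
def vdistEqVec (O : Set R) (s : Fin n → R) (a0 : Fin n → R) (X : Set (Fin n → R)) : Prop :=
  X ≠ ∅ ∧ (∀ i, vge O (s i) (infDist a0 X)) ∧ (∃ i, vge O (infDist a0 X) (s i))

/-- `a⁰, …, aᵐ` is a plain val-chain. -/
def IsPlainValChain (O : Set R) (X' : ℕ → Set (Fin n → R)) (m : ℕ) (e : ℕ → ℕ)
    (a : ℕ → Fin n → R) : Prop :=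
  (∀ l : ℕ, l ≤ m → a l ∈ skel X' (e l)) ∧
  (∀ k l : ℕ, k < l → l ≤ m → e l < e k) ∧
  (∀ l : ℕ, 1 ≤ l → l ≤ m → vdistLtVec O (a 0 - a l) (a 0) (Xlow X' (e l))) ∧
  (∀ l : ℕ, 1 ≤ l → l ≤ m → vdistEqVec O (a 0 - a l) (a 0) (Xlow X' (e (l - 1))))

/-- `a⁰, …, aᵐ` is an augmented val-chain. -/
def IsAugValChain (O : Set R) (X' : ℕ → Set (Fin n → R)) (m : ℕ) (e : ℕ → ℕ)
    (a : ℕ → Fin n → R) : Prop :=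
  1 ≤ m ∧ e 1 = e 0 ∧
  (∀ l : ℕ, l ≤ m → a l ∈ skel X' (e l)) ∧
  (∀ k l : ℕ, 1 ≤ k → k < l → l ≤ m → e l < e k) ∧
  (∀ l : ℕ, 1 ≤ l → l ≤ m → vdistLtVec O (a 0 - a l) (a 0) (Xlow X' (e l))) ∧
  (∀ l : ℕ, 2 ≤ l → l ≤ m → vdistEqVec O (a 0 - a l) (a 0) (Xlow X' (e (l - 1))))

/-- `a⁰, …, aᵐ` is a weak plain val-chain (the strict inequality on distances is weakened). -/
def IsWeakPlainValChain (O : Set R) (X' : ℕ → Set (Fin n → R)) (m : ℕ) (e : ℕ → ℕ)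
    (a : ℕ → Fin n → R) : Prop :=
  (∀ l : ℕ, l ≤ m → a l ∈ skel X' (e l)) ∧
  (∀ k l : ℕ, k < l → l ≤ m → e l < e k) ∧
  (∀ l : ℕ, 1 ≤ l → l ≤ m → vdistLeVec O (a 0 - a l) (a 0) (Xlow X' (e l))) ∧
  (∀ l : ℕ, 1 ≤ l → l ≤ m → vdistEqVec O (a 0 - a l) (a 0) (Xlow X' (e (l - 1))))

/-- `a⁰, …, aᵐ` is a weak augmented val-chain. -/
def IsWeakAugValChain (O : Set R) (X' : ℕ → Set (Fin n → R)) (m : ℕ) (e : ℕ → ℕ)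
    (a : ℕ → Fin n → R) : Prop :=
  1 ≤ m ∧ e 1 = e 0 ∧
  (∀ l : ℕ, l ≤ m → a l ∈ skel X' (e l)) ∧
  (∀ k l : ℕ, 1 ≤ k → k < l → l ≤ m → e l < e k) ∧
  (∀ l : ℕ, 1 ≤ l → l ≤ m → vdistLeVec O (a 0 - a l) (a 0) (Xlow X' (e l))) ∧
  (∀ l : ℕ, 2 ≤ l → l ≤ m → vdistEqVec O (a 0 - a l) (a 0) (Xlow X' (e (l - 1))))

/-- The valuative Mostowski inequality `v(Q) ≥ λ₁ - λ_{m+1}`, where `λ₁ = v(a⁰ - a¹)` and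
`λ_{m+1} = v-dist(a⁰, X^{e_m - 1})`. If `λ_{m+1} = -∞` (i.e. `X^{e_m-1} = ∅`), `Q` must be `0`. -/
def valMostIneq (O : Set R) (X' : ℕ → Set (Fin n → R)) (em : ℕ) (a0 a1 : Fin n → R)
    (Q : Matrix (Fin n) (Fin n) R) : Prop :=
  if Xlow X' em = ∅ then Q = 0
  else ∀ i j : Fin n, ∃ k : Fin n, vge O (Q i j * infDist a0 (Xlow X' em)) ((a0 - a1) k)

variable [TopologicalSpace R] [OrderTopology R]
variable (L : FirstOrder.Language) [L.Structure R]

/-- `X'` satisfies the valuative Mostowski Condition at every (strict) val-chain. -/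
def IsValLipschitz (A : Set R) (O : Set R) (X' : ℕ → Set (Fin n → R)) : Prop :=
  (∀ (m : ℕ) (e : ℕ → ℕ) (a : ℕ → Fin n → R), 1 ≤ m → IsPlainValChain O X' m e a →
    ∀ P : ℕ → Matrix (Fin n) (Fin n) R, ChainProjs L A X' e a P m →
      valMostIneq O X' (e m) (a 0) (a 1) ((1 - P 0) * prodP P 1 m)) ∧
  (∀ (m : ℕ) (e : ℕ → ℕ) (a : ℕ → Fin n → R), IsAugValChain O X' m e a →
    ∀ P : ℕ → Matrix (Fin n) (Fin n) R, ChainProjs L A X' e a P m →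
      valMostIneq O X' (e m) (a 0) (a 1) ((P 0 - P 1) * prodP P 2 (m - 1)))

/-- `X'` satisfies the valuative Mostowski Condition at every weak val-chain. -/
def SatisfiesWeakValMostowski (A : Set R) (O : Set R) (X' : ℕ → Set (Fin n → R)) : Prop :=
  (∀ (m : ℕ) (e : ℕ → ℕ) (a : ℕ → Fin n → R), 1 ≤ m → IsWeakPlainValChain O X' m e a →
    ∀ P : ℕ → Matrix (Fin n) (Fin n) R, ChainProjs L A X' e a P m →
      valMostIneq O X' (e m) (a 0) (a 1) ((1 - P 0) * prodP P 1 m)) ∧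
  (∀ (m : ℕ) (e : ℕ → ℕ) (a : ℕ → Fin n → R), IsWeakAugValChain O X' m e a →
    ∀ P : ℕ → Matrix (Fin n) (Fin n) R, ChainProjs L A X' e a P m →
      valMostIneq O X' (e m) (a 0) (a 1) ((P 0 - P 1) * prodP P 2 (m - 1)))

end LipStrat

end Val
section Aligned

namespace LipStrat

open Matrix

variable {R : Type*} [Field R] [LinearOrder R] [IsStrictOrderedRing R] [IsRealClosed R]

/-- Projection to the first `d` coordinates. -/
def prle {n : ℕ} (d : ℕ) (h : d ≤ n) (x : Fin n → R) : Fin d → R :=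
  fun i => x (Fin.castLE h i)

/-- Projection to the last `n - d` coordinates. -/
def prgt {n : ℕ} (d : ℕ) (h : d ≤ n) (x : Fin n → R) : Fin (n - d) → R :=
  fun i => x (Fin.cast (Nat.add_sub_cancel' h) (Fin.natAdd d i))

/-- Projection to the first `d` coordinates (junk value if `d > n`). -/
def prleD {n : ℕ} (d : ℕ) (x : Fin n → R) : Fin d → R :=
  if h : d ≤ n then prle d h x else fun _ => 0

/-- Projection to the last `n - d` coordinates (junk value if `d > n`). -/
def prgtD {n : ℕ} (d : ℕ) (x : Fin n → R) : Fin (n - d) → R :=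
  if h : d ≤ n then prgt d h x else fun _ => 0

variable [TopologicalSpace R] [OrderTopology R]
variable (L : FirstOrder.Language) [L.Structure R]

/-- `S ⊆ R^n` is aligned: for `d = dim S`, the base `S̄ = pr_{≤d}(S)` is open and `S` is the
graph of a definable C¹ function `f : S̄ → R^{n-d}` all of whose partial derivatives have
nonnegative valuation (i.e. lie in the valuation ring `O`). -/
def IsAligned (A O : Set R) {n : ℕ} (S : Set (Fin n → R)) : Prop :=
  ∃ (d : ℕ) (h : d ≤ n) (f : (Fin d → R) → Fin (n - d) → R)
    (J : (Fin d → R) → Fin (n - d) → Fin d → R),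
    d = odim S ∧ IsOpen (prle d h '' S) ∧ DefFun L A f ∧
    IsC1On f (prle d h '' S) J ∧
    (∀ a ∈ prle d h '' S, ∀ i j, J a i j ∈ O) ∧
    S = {x : Fin n → R | prle d h x ∈ prle d h '' S ∧ prgt d h x = f (prle d h x)}

end LipStrat

end Aligned

section Misc

namespace LipStrat

open Matrix

variable {R : Type*} [Field R] [LinearOrder R] [IsStrictOrderedRing R] [IsRealClosed R]

/-- The fiber of a definable family `X ⊆ R^n × Q` at the parameter `q`. -/
def famFiber {n N : ℕ} (X : Set ((Fin n ⊕ Fin N) → R)) (q : Fin N → R) :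
    Set (Fin n → R) :=
  {x | Sum.elim x q ∈ X}

/-- `M ∈ GLₙ(O)`: `M` is invertible and both `M` and its inverse have entries in `O`. -/
def MemGLO {n : ℕ} (O : Set R) (M : Matrix (Fin n) (Fin n) R) : Prop :=
  ∃ M' : Matrix (Fin n) (Fin n) R, M * M' = 1 ∧ M' * M = 1 ∧
    (∀ i j, M i j ∈ O) ∧ (∀ i j, M' i j ∈ O)

/-- `v(a) ≥ v(b) - v-dist(y, Z)`, with the conventions that the right hand side is `∞`
(forcing `a = 0`) if `Z = ∅` or `b = 0`, and `-∞` (trivially true) if `v-dist(y,Z) = ∞`. -/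
def vgeSubVdist {k : ℕ} (O : Set R) (a b : R) (y : Fin k → R) (Z : Set (Fin k → R)) : Prop :=
  if Z = ∅ then a = 0
  else if b = 0 then a = 0
  else if infDist y Z = 0 then True
  else vge O (a * infDist y Z) b

end LipStrat

end Misc

section Sedated

namespace LipStrat

open Matrix

variable {R : Type*} [Field R] [LinearOrder R] [IsStrictOrderedRing R] [IsRealClosed R]

/-- `ζ_ℓ(x) = dist(pr_{≤ e_ℓ}(x), R^{e_ℓ} ∖ pr_{≤ e_ℓ}(X))`. -/
def zeta {e1 : ℕ} (el : ℕ) (X : Set (Fin e1 → R)) (x : Fin e1 → R) : R :=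
  infDist (prleD el x) ((prleD el '' X)ᶜ)

/-- `ζ_ℓ = ∞`, i.e. the projection of `X` to the first `e_ℓ` coordinates is everything. -/
def zetaInf {e1 : ℕ} (el : ℕ) (X : Set (Fin e1 → R)) : Prop :=
  ((prleD el '' X)ᶜ : Set (Fin el → R)) = ∅

/-- `σ_ℓ(x) = max {1, ‖pr_{> e_ℓ}(x)‖ · ζ_{ℓ-1}(x)⁻¹}` (equal to `1` if `ζ_{ℓ-1} = ∞`). -/
def sigmaFn {e1 : ℕ} (e : ℕ → ℕ) (X : Set (Fin e1 → R)) (l : ℕ) (x : Fin e1 → R) : R :=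
  if zetaInf (e (l - 1)) X then 1
  else max 1 (enorm (prgtD (e l) x) * (zeta (e (l - 1)) X x)⁻¹)

/-- The sedation inequality `v(d) ≥ v(u) - v(ζ) + Σ v(σ)`, encoded multiplicatively, with the
conventions: if `ζ = ∞` the right hand side is `∞` (forcing `d = 0`); if `ζ = 0` it is
`-∞` (trivially true). -/
def sedIneq (O : Set R) (dv u ζ σp : R) (ζinf : Prop) : Prop :=
  if ζinf then dv = 0
  else if ζ = 0 then True
  else vge O (dv * ζ) (u * σp)

/-- The three versions of sedation. -/
inductive SedVersion | a | b | c

/-- The quantity `u` appearing in the sedation condition. -/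
def sedU {e1 : ℕ} (ver : SedVersion) (e : ℕ → ℕ) (f : (Fin e1 → R) → R)
    (x : Fin e1 → R) : R :=
  match ver with
  | .a => f x
  | .b => max |f x| (enorm (prgtD (e 2) x))
  | .c => 1

variable [TopologicalSpace R] [OrderTopology R]

/-- `f : X → R` (`X ⊆ R^{e 1}`) is `e_{[1,m']}`-v-sedated: it is C¹ and
`v(∂ᵢ f(x)) ≥ v(u(x)) - v(ζ_{m'}(x)) + Σ_{ℓ=2}^{m'} v(σ_ℓ(x))` for all `x ∈ X` and
all `1 ≤ i ≤ e_{m'}`. -/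
def IsSedated (O : Set R) (ver : SedVersion) (e : ℕ → ℕ) (m' : ℕ)
    (X : Set (Fin (e 1) → R)) (f : (Fin (e 1) → R) → R) : Prop :=
  ∃ g : (Fin (e 1) → R) → Fin (e 1) → R,
    IsC1ScalarOn f X g ∧
    ∀ x ∈ X, ∀ i : Fin (e 1), (i : ℕ) < e m' →
      sedIneq O (g x i) (sedU ver e f x) (zeta (e m') X x)
        (∏ l ∈ Finset.Icc 2 m', sigmaFn e X l x) (zetaInf (e m') X)

/-- `f : X → R` is `e_{[1,m']}`-c₂-sedated: it is C², `v(Jac f) ≥ 0`, and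
`v(∂ᵢⱼ f(x)) ≥ - v(ζ_{m'}(x)) + Σ_{ℓ=2}^{m'} v(σ_ℓ(x))` for `1 ≤ i ≤ e_{m'}`,
`1 ≤ j ≤ e_1`. -/
def IsC2Sedated (O : Set R) (e : ℕ → ℕ) (m' : ℕ)
    (X : Set (Fin (e 1) → R)) (f : (Fin (e 1) → R) → R) : Prop :=
  ∃ (g : (Fin (e 1) → R) → Fin (e 1) → R)
    (H : (Fin (e 1) → R) → Fin (e 1) → Fin (e 1) → R),
    IsC1ScalarOn f X g ∧
    (∀ j : Fin (e 1), IsC1ScalarOn (fun y => g y j) X (fun y => H y j)) ∧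
    (∀ x ∈ X, ∀ j : Fin (e 1), g x j ∈ O) ∧
    ∀ x ∈ X, ∀ i : Fin (e 1), (i : ℕ) < e m' → ∀ j : Fin (e 1),
      sedIneq O (H x j i) 1 (zeta (e m') X x)
        (∏ l ∈ Finset.Icc 2 m', sigmaFn e X l x) (zetaInf (e m') X)

end LipStrat

end Sedated
section More

namespace LipStrat

open Matrix

variable {R : Type*} [Field R] [LinearOrder R] [IsStrictOrderedRing R] [IsRealClosed R]

/-- `v(M) ≥ v(s) - v(t)` for a matrix `M` and vectors `s, t`. -/
def vMatGeSubVec {n : ℕ} (O : Set R) (M : Matrix (Fin n) (Fin n) R) (s t : Fin n → R) :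
    Prop :=
  ∀ i j : Fin n, ∃ k : Fin n, ∀ l : Fin n, vge O (M i j * t l) (s k)

/-- `v(M) ≥ v(s) - v-dist(a₀, X)` for a matrix `M` and a vector `s`
(`M` must be `0` if `X = ∅`). -/
def vMatGeSubDist {n : ℕ} (O : Set R) (M : Matrix (Fin n) (Fin n) R) (s : Fin n → R)
    (a0 : Fin n → R) (X : Set (Fin n → R)) : Prop :=
  if X = ∅ then M = 0
  else ∀ i j : Fin n, ∃ k : Fin n, vge O (M i j * infDist a0 X) (s k)

/-- `f` has partial derivative `c` in the `i`-th coordinate direction at `y`. -/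
def HasPartialAt {k : ℕ} (f : (Fin k → R) → R) (i : Fin k) (c : R) (y : Fin k → R) : Prop :=
  ∀ ε : R, 0 < ε → ∃ δ : R, 0 < δ ∧ ∀ h : R, h ≠ 0 → |h| < δ →
    |f (fun j => y j + (if j = i then h else 0)) - f y - c * h| ≤ ε * |h|

/-- `v(J(W)) ≥ 0`: the subspace `W ⊆ R^n` is the graph of a linear map
`M_W : R^d → R^{n-d}` all of whose entries lie in `O`
(in particular `W ∈ Gr°_{n,d}`, i.e. `W` projects onto the first `d` coordinates). -/
def JBounded (O : Set R) {n : ℕ} (d : ℕ) (h : d ≤ n) (W : Submodule R (Fin n → R)) : Prop :=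
  ∃ Mv : Matrix (Fin (n - d)) (Fin d) R, (∀ i j, Mv i j ∈ O) ∧
    (W : Set (Fin n → R)) = {x : Fin n → R | prgt d h x = Mv.mulVec (prle d h x)}

/-- The matrix representation of a set `Θ` of `d`-dimensional subspaces of `R^n`:
the set of `n × d` matrices of rank `d` whose column span lies in `Θ`. -/
def grassRep {n d : ℕ} (Θ : Set (Submodule R (Fin n → R))) :
    Set ((Fin n × Fin d) → R) :=
  {M | LinearIndependent R (fun j : Fin d => fun i : Fin n => M (i, j)) ∧
    Submodule.span R (Set.range fun j : Fin d => fun i : Fin n => M (i, j)) ∈ Θ}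

end LipStrat

end More

/-!
If `W` is spanned by the columns of `A`, Cramer's rule expresses the entries of the linear map
whose graph is `κ W` as quotients of `d × d` minors of `κ A` by the minor on the first `d` rows.
So it suffices that this top minor is at least `ε` times every minor of `A`, for a fixed rational
`ε > 0`; such a condition is open, definable and independent of the choice of `A`.

Interpolating Householder reflections gives a polynomial curve `M(x)` of rational similitudes which
passes through a monomial matrix for every permutation. The top minor of `M(x) A` is a polynomial
in `x` whose degree is bounded by some `m` depending only on `n`, and at the parameter of a suitable
permutation its value is the largest minor of `A` times a nonzero rational constant. By Lagrange
interpolation, among any finite set of parameters fixed beforehand at most `m` make the top minor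
too small. Thus every `W` is in good position with respect to all but `m` of `N` fixed similitudes.
As soon as `N > ℓ m`, any `ℓ` sets of the form "all but `m` of these similitudes" have a common
element.
-/

namespace LipStrat.ExpandsOrderedRing

variable {R : Type*} [Field R] [LinearOrder R] {L : FirstOrder.Language} [L.Structure R]
variable {α ι m : Type*} {A : Set R} {f g : (α → R) → R}

theorem definableFun_add (hring : ExpandsOrderedRing (R := R) L)
    (hf : A.DefinableFun L f) (hg : A.DefinableFun L g) :
    A.DefinableFun L fun v => f v + g v := by
  have hadd : A.DefinableFun L fun v : Fin 2 → R => v 0 + v 1 :=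
    (hring.add_def.mono (empty_subset A)).preimage_comp
      (![some 0, some 1, none] : Fin 3 → Option (Fin 2))
  have hfg : A.DefinableMap L fun v => ![f v, g v] := by
    simp [Set.DefinableMap, *]
  exact hadd.comp hfg

theorem definableFun_mul (hring : ExpandsOrderedRing (R := R) L)
    (hf : A.DefinableFun L f) (hg : A.DefinableFun L g) :
    A.DefinableFun L fun v => f v * g v := by
  have hmul : A.DefinableFun L fun v : Fin 2 → R => v 0 * v 1 :=
    (hring.mul_def.mono (empty_subset A)).preimage_comp
      (![some 0, some 1, none] : Fin 3 → Option (Fin 2))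
  have hfg : A.DefinableMap L fun v => ![f v, g v] := by
    simp [Set.DefinableMap, *]
  exact hmul.comp hfg

theorem definable_lt (hring : ExpandsOrderedRing (R := R) L)
    (hf : A.DefinableFun L f) (hg : A.DefinableFun L g) :
    A.Definable L {v | f v < g v} := by
  have hfg : A.DefinableMap L fun v => ![f v, g v] := by
    simp [Set.DefinableMap, *]
  exact (hring.lt_def.mono (empty_subset A)).preimage_map hfg

theorem definableFun_zero (hring : ExpandsOrderedRing (R := R) L) :
    A.DefinableFun L fun _ : α → R => (0 : R) := by
  have hidem : A.Definable L {v : Option α → R | v none + v none = v none} :=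
    (hring.definableFun_add (.proj _) (.proj _)).ofPred_eq (.proj _)
  rw [DefinableFun]
  convert hidem using 1
  ext v
  simp [Function.tupleGraph, eq_comm]

theorem definableFun_one (hring : ExpandsOrderedRing (R := R) L) :
    A.DefinableFun L fun _ : α → R => (1 : R) := by
  have hidem : A.Definable L {v : Option α → R | v none * v none = v none} :=
    (hring.definableFun_mul (.proj _) (.proj _)).ofPred_eq (.proj _)
  have hzero : A.Definable L {v : Option α → R | v none = 0} :=
    DefinableFun.ofPred_eq (.proj _) hring.definableFun_zero
  rw [DefinableFun]
  convert hidem.inter hzero.compl using 1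
  ext v
  constructor
  · intro hv
    change 1 = v none at hv
    simp [← hv]
  · rintro ⟨hv, hv0⟩
    exact (mul_eq_left₀ hv0).1 hv |>.symm

theorem definableFun_neg (hring : ExpandsOrderedRing (R := R) L) (hf : A.DefinableFun L f) :
    A.DefinableFun L fun v => -f v := by
  have hneg : A.DefinableFun L fun v : Fin 1 → R => -v 0 := by
    have hsum : A.Definable L {v : Option (Fin 1) → R | v (some 0) + v none = 0} :=
      (hring.definableFun_add (.proj _) (.proj _)).ofPred_eq hring.definableFun_zero
    rw [DefinableFun]
    convert hsum using 1
    ext v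
    exact neg_eq_iff_add_eq_zero
  have hf' : A.DefinableMap L fun v => ![f v] := by
    simp [Set.DefinableMap, *]
  exact hneg.comp hf'

theorem definableFun_natCast (hring : ExpandsOrderedRing (R := R) L) (k : ℕ) :
    A.DefinableFun L fun _ : α → R => (k : R) := by
  induction k with
  | zero => simpa only [Nat.cast_zero] using hring.definableFun_zero
  | succ k ih => simpa only [Nat.cast_succ] using hring.definableFun_add ih hring.definableFun_one

theorem definableFun_intCast (hring : ExpandsOrderedRing (R := R) L) (k : ℤ) :
    A.DefinableFun L fun _ : α → R => (k : R) := by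
  obtain ⟨k, rfl | rfl⟩ := k.eq_nat_or_neg
  · simpa only [Int.cast_natCast] using hring.definableFun_natCast k
  · simpa only [Int.cast_neg, Int.cast_natCast] using
      hring.definableFun_neg (hring.definableFun_natCast k)

theorem definableFun_sum (hring : ExpandsOrderedRing (R := R) L) (s : Finset ι)
    {f : ι → (α → R) → R} (hf : ∀ i, A.DefinableFun L (f i)) :
    A.DefinableFun L fun v => ∑ i ∈ s, f i v := by
  induction s using Finset.cons_induction with
  | empty => simpa only [Finset.sum_empty] using hring.definableFun_zero
  | cons a s ha ih => simpa only [Finset.sum_cons] using hring.definableFun_add (hf a) ih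

theorem definableFun_prod (hring : ExpandsOrderedRing (R := R) L) (s : Finset ι)
    {f : ι → (α → R) → R} (hf : ∀ i, A.DefinableFun L (f i)) :
    A.DefinableFun L fun v => ∏ i ∈ s, f i v := by
  induction s using Finset.cons_induction with
  | empty => simpa only [Finset.prod_empty] using hring.definableFun_one
  | cons a s ha ih => simpa only [Finset.prod_cons] using hring.definableFun_mul (hf a) ih

theorem definableFun_det [Fintype m] [DecidableEq m] (hring : ExpandsOrderedRing (R := R) L)
    {M : (α → R) → Matrix m m R} (hM : ∀ i j, A.DefinableFun L fun v => M v i j) :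
    A.DefinableFun L fun v => (M v).det := by
  simp only [Matrix.det_apply']
  exact hring.definableFun_sum _ fun σ =>
    hring.definableFun_mul (hring.definableFun_intCast _)
      (hring.definableFun_prod _ fun i => hM _ i)

variable [IsStrictOrderedRing R]

theorem definableFun_ratCast (hring : ExpandsOrderedRing (R := R) L) (q : ℚ) :
    A.DefinableFun L fun _ : α → R => (q : R) := by
  have hmul : A.Definable L {v : Option α → R | (q.den : R) * v none = q.num} :=
    (hring.definableFun_mul (hring.definableFun_natCast _) (.proj _)).ofPred_eq
      (hring.definableFun_intCast _)
  rw [DefinableFun]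
  convert hmul using 1
  ext v
  change (q : R) = v none ↔ (q.den : R) * v none = q.num
  rw [Rat.cast_def, div_eq_iff (Nat.cast_ne_zero.2 q.den_nz), mul_comm, eq_comm]

theorem definableFun_abs (hring : ExpandsOrderedRing (R := R) L) (hf : A.DefinableFun L f) :
    A.DefinableFun L fun v => |f v| := by
  have hite : A.DefinableFun L fun v => if f v < 0 then -f v else f v :=
    DefinableFun.ite (hring.definable_lt hf hring.definableFun_zero) (hring.definableFun_neg hf) hf
  convert hite using 2 with v
  split_ifs with hv
  exacts [abs_of_neg hv, abs_of_nonneg (not_lt.1 hv)]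

theorem mem_convexClosure_of_abs_le_natCast (hring : ExpandsOrderedRing (R := R) L)
    (R₀ : L.ElementarySubstructure R) {k : ℕ} {x : R} (hx : |x| ≤ k) :
    x ∈ convexClosure (R₀ : Set R) := by
  have hdef : (R₀ : Set R).Definable L {v : Fin 1 → R | (k : R) < v 0} :=
    hring.definable_lt (hring.definableFun_natCast k) (.proj _)
  obtain ⟨b, hkb, hb⟩ := R₀.meetsDefinable {x : R | (k : R) < x} ⟨k + 1, lt_add_one _⟩ hdef
  have hxb : |x| < b := hx.trans_lt hkb
  exact ⟨b, hb, abs_lt.1 hxb⟩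

end LipStrat.ExpandsOrderedRing

namespace GrassmannianCovering

open LipStrat

theorem exists_eq_mul_of_range_le {m n R : Type*} [Fintype m] [CommRing R] {A A' : Matrix n m R}
    (h : LinearMap.range A'.mulVecLin ≤ LinearMap.range A.mulVecLin) :
    ∃ g : Matrix m m R, A' = A * g := by
  classical
  have hcol : ∀ j, ∃ c, A *ᵥ c = A'.col j := fun j => h ⟨Pi.single j 1, by simp⟩
  choose c hc using hcol
  exact ⟨(of c)ᵀ, ext_col fun j => (hc j).symm⟩

section RowMinor

variable {m n R : Type*} [Fintype m] [DecidableEq m]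

section CommRing

variable [CommRing R]

/-- The minor of the tall matrix `A` on the rows `r i`, `i : m`. As `r` ranges over all maps
`m → n`, these are (up to signs and repetitions) the Plücker coordinates of the column space. -/
def rowMinor (A : Matrix n m R) (r : m → n) : R :=
  (A.submatrix r id).det

theorem rowMinor_mul (A : Matrix n m R) (g : Matrix m m R) (r : m → n) :
    rowMinor (A * g) r = rowMinor A r * g.det :=
  det_mul (A.submatrix r id) g

theorem rowMinor_update (A : Matrix n m R) (r : m → n) (j : m) (i : n) :
    rowMinor A (Function.update r j i) = ((A.submatrix r id).updateRow j (A.row i)).det := by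
  rw [rowMinor]
  congr 1
  ext a b
  by_cases ha : a = j
  · subst ha; simp
  · simp [ha]

theorem injective_of_rowMinor_ne_zero {A : Matrix n m R} {r : m → n} (hr : rowMinor A r ≠ 0) :
    Function.Injective r := by
  intro a b hab
  by_contra hne
  exact hr (det_zero_of_row_eq hne (funext fun j => congrArg (A · j) hab))

theorem rowMinor_mul_eq_sum {l : Type*} [Fintype l] (K : Matrix n l R) (A : Matrix l m R)
    (r : m → n) :
    rowMinor (K * A) r = ∑ f : m → l, (∏ i, K (r i) (f i)) * rowMinor A f := by
  have hrows : (K * A).submatrix r id = fun i => ∑ l, K (r i) l • A l := by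
    ext i j
    simp [Matrix.mul_apply]
  calc rowMinor (K * A) r
      = (detRowAlternating : (m → R) [⋀^m]→ₗ[R] R).toMultilinearMap
          fun i => ∑ l, K (r i) l • A l := congrArg det hrows
    _ = ∑ f : m → l, (detRowAlternating : (m → R) [⋀^m]→ₗ[R] R).toMultilinearMap
          fun i => K (r i) (f i) • A (f i) := MultilinearMap.map_sum _ _
    _ = ∑ f : m → l, (∏ i, K (r i) (f i)) * rowMinor A f :=
        Finset.sum_congr rfl fun f _ => MultilinearMap.map_smul_univ _ _ _

theorem abs_rowMinor_mul_le {l : Type*} [Fintype l] [LinearOrder R] [IsStrictOrderedRing R]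
    (K : Matrix n l R) {A : Matrix l m R} {D : R} (hD : ∀ f, |rowMinor A f| ≤ D) (r : m → n) :
    |rowMinor (K * A) r| ≤ (∏ i, ∑ l, |K (r i) l|) * D := by
  calc |rowMinor (K * A) r|
      ≤ ∑ f : m → l, |(∏ i, K (r i) (f i)) * rowMinor A f| := by
        rw [rowMinor_mul_eq_sum]
        exact Finset.abs_sum_le_sum_abs _ _
    _ ≤ ∑ f : m → l, (∏ i, |K (r i) (f i)|) * D := by
        refine Finset.sum_le_sum fun f _ => ?_
        rw [abs_mul, Finset.abs_prod]
        exact mul_le_mul_of_nonneg_left (hD f) (Finset.prod_nonneg fun i _ => abs_nonneg _)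
    _ = (∏ i, ∑ l, |K (r i) l|) * D := by
        rw [← Finset.sum_mul, Finset.prod_univ_sum, Fintype.piFinset_univ]

end CommRing

section Field

variable [Field R]

theorem linearIndependent_col_of_rowMinor_ne_zero {A : Matrix n m R} {r : m → n}
    (hr : rowMinor A r ≠ 0) : LinearIndependent R A.col := by
  have hsub : LinearIndependent R (A.submatrix r id).col :=
    linearIndependent_cols_iff_isUnit.2 ((isUnit_iff_isUnit_det _).2 hr.isUnit)
  exact LinearIndependent.of_comp (LinearMap.funLeft R R r) hsub

theorem exists_rowMinor_ne_zero [Finite n] {A : Matrix n m R} (hA : LinearIndependent R A.col) :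
    ∃ r : m → n, rowMinor A r ≠ 0 := by
  have := Fintype.ofFinite n
  obtain ⟨κ, a, ha, hspan, hli⟩ := exists_linearIndependent' R A.row
  have : Fintype κ := @Fintype.ofFinite κ (Finite.of_injective a ha)
  have hcard : Fintype.card κ = Fintype.card m := by
    rw [← finrank_span_eq_card hli, hspan, ← rank_eq_finrank_span_row, ← rank_transpose,
      LinearIndependent.rank_matrix (M := Aᵀ) hA]
  have e : m ≃ κ := Fintype.equivOfCardEq hcard.symm
  have hrows : LinearIndependent R (A.submatrix (a ∘ e) id).row := hli.comp e e.injective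
  exact ⟨a ∘ e, ((isUnit_iff_isUnit_det _).1 (linearIndependent_rows_iff_isUnit.1 hrows)).ne_zero⟩

theorem exists_rowMinor_ne_zero_forall_abs_le [LinearOrder R] [IsStrictOrderedRing R] [Finite n]
    {A : Matrix n m R} (hA : LinearIndependent R A.col) :
    ∃ r : m → n, rowMinor A r ≠ 0 ∧ ∀ f, |rowMinor A f| ≤ |rowMinor A r| := by
  have := Fintype.ofFinite n
  obtain ⟨r₁, hr₁⟩ := exists_rowMinor_ne_zero hA
  obtain ⟨r, -, hr⟩ := Finset.exists_max_image Finset.univ (fun f => |rowMinor A f|)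
    ⟨r₁, Finset.mem_univ _⟩
  have hmax : ∀ f, |rowMinor A f| ≤ |rowMinor A r| := fun f => hr f (Finset.mem_univ f)
  exact ⟨r, abs_pos.1 ((abs_pos.2 hr₁).trans_le (hmax r₁)), hmax⟩

theorem mul_inv_apply_eq_det_updateRow_div {l : Type*} (B : Matrix m m R) (C : Matrix l m R)
    (i : l) (j : m) : (C * B⁻¹) i j = (B.updateRow j (C.row i)).det / B.det := by
  calc (C * B⁻¹) i j
      = (B.det)⁻¹ * (Bᵀ.adjugate *ᵥ C.row i) j := by
        rw [inv_def, Matrix.mul_smul, Matrix.smul_apply, smul_eq_mul, Ring.inverse_eq_inv',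
          ← adjugate_transpose, mulVec_transpose]
        rfl
    _ = (B.updateRow j (C.row i)).det / B.det := by
        rw [← cramer_eq_adjugate_mulVec, cramer_transpose_apply, inv_mul_eq_div]

end Field

end RowMinor

section Graph

variable {R : Type*} {n d : ℕ}

theorem eq_of_prle_eq_of_prgt_eq (h : d ≤ n) {x y : Fin n → R}
    (hle : prle d h x = prle d h y) (hgt : prgt d h x = prgt d h y) : x = y := by
  ext i
  obtain ⟨i, rfl⟩ := (finCongr (Nat.add_sub_cancel' h)).surjective i
  induction i using Fin.addCases with
  | left i => exact congrFun hle i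
  | right i => exact congrFun hgt i

variable [Field R]

theorem coe_range_mulVecLin_eq_graph (h : d ≤ n) {B : Matrix (Fin n) (Fin d) R}
    (hB : rowMinor B (Fin.castLE h) ≠ 0) :
    (LinearMap.range B.mulVecLin : Set (Fin n → R)) =
      {x | prgt d h x = (of (fun i j => prgt d h (B.col j) i) *
        (B.submatrix (Fin.castLE h) id)⁻¹) *ᵥ prle d h x} := by
  set B₁ := B.submatrix (Fin.castLE h) id
  have hB₁ : IsUnit B₁.det := hB.isUnit
  have hle : ∀ c, prle d h (B *ᵥ c) = B₁ *ᵥ c := fun c => rfl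
  have hgt : ∀ c, prgt d h (B *ᵥ c) = (of fun i j => prgt d h (B.col j) i) *ᵥ c := fun c => rfl
  ext x
  constructor
  · rintro ⟨c, rfl⟩
    rw [mem_ofPred_eq, mulVecLin_apply, hle, hgt, mulVec_mulVec, Matrix.mul_assoc,
      nonsing_inv_mul _ hB₁, Matrix.mul_one]
  · intro hx
    refine ⟨B₁⁻¹ *ᵥ prle d h x, eq_of_prle_eq_of_prgt_eq h ?_ ?_⟩
    · rw [mulVecLin_apply, hle, mulVec_mulVec, mul_nonsing_inv _ hB₁, one_mulVec]
    · rw [mulVecLin_apply, hgt, hx, mulVec_mulVec]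

theorem jBounded_range_mulVecLin {O : Set R} (h : d ≤ n) {B : Matrix (Fin n) (Fin d) R}
    (hB : rowMinor B (Fin.castLE h) ≠ 0)
    (hO : ∀ r, rowMinor B r / rowMinor B (Fin.castLE h) ∈ O) :
    JBounded O d h (LinearMap.range B.mulVecLin) := by
  refine ⟨_, fun i j => ?_, coe_range_mulVecLin_eq_graph h hB⟩
  rw [mul_inv_apply_eq_det_updateRow_div]
  have hrow := hO (Function.update (Fin.castLE h) j
    (Fin.cast (Nat.add_sub_cancel' h) (Fin.natAdd d i)))
  rwa [rowMinor_update] at hrow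

end Graph

section HasDominantMinor

variable {m n R : Type*} [Fintype m] [DecidableEq m] [Fintype n]
variable [Field R] [LinearOrder R] {ε : R} {r₀ : m → n} {K : Matrix n n R} {A : Matrix n m R}

/-- Quantitative transversality: the minor of `K * A` on the rows `r₀` is nonzero, and is not
smaller than the minors of `A` by more than the factor `ε`. For `r₀` the first `d` rows this says
that `K` moves the column space of `A` into `Gr°`, with a margin measured by `ε`. -/
def HasDominantMinor (ε : R) (r₀ : m → n) (K : Matrix n n R) (A : Matrix n m R) : Prop :=
  ∀ r, ε * |rowMinor A r| < |rowMinor (K * A) r₀|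

theorem isOpen_hasDominantMinor [IsStrictOrderedRing R] [TopologicalSpace R] [OrderTopology R]
    (ε : R) (r₀ : m → n) (K : Matrix n n R) :
    IsOpen {v : n × m → R | HasDominantMinor ε r₀ K (of fun i j => v (i, j))} := by
  have hof : Continuous fun v : n × m → R => of fun i j => v (i, j) :=
    continuous_matrix fun i j => continuous_apply (i, j)
  simp only [HasDominantMinor, ofPred_forall]
  refine isOpen_iInter_of_finite fun r => isOpen_lt ?_ ?_
  · exact continuous_const.mul (hof.matrix_submatrix _ _).matrix_det.abs
  · exact ((continuous_const.matrix_mul hof).matrix_submatrix _ _).matrix_det.abs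

theorem definable_hasDominantMinor [IsStrictOrderedRing R] {L : FirstOrder.Language}
    [L.Structure R] (hring : ExpandsOrderedRing (R := R) L) (ε : ℚ) (r₀ : m → n)
    (κ : Matrix n n ℚ) :
    (∅ : Set R).Definable L {v : n × m → R |
      HasDominantMinor (ε : R) r₀ (κ.map Rat.cast) (of fun i j => v (i, j))} := by
  simp only [HasDominantMinor, ofPred_forall]
  refine definable_iInter_of_finite fun r => hring.definable_lt ?_ ?_
  · exact hring.definableFun_mul (hring.definableFun_ratCast ε)
      (hring.definableFun_abs (hring.definableFun_det fun i j => .proj _))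
  · refine hring.definableFun_abs (hring.definableFun_det fun i j => ?_)
    exact hring.definableFun_sum _ fun l =>
      hring.definableFun_mul (hring.definableFun_ratCast _) (.proj _)

namespace HasDominantMinor

variable [IsStrictOrderedRing R]

theorem rowMinor_ne_zero (hε : 0 ≤ ε) (hA : HasDominantMinor ε r₀ K A) :
    rowMinor (K * A) r₀ ≠ 0 :=
  abs_pos.1 ((mul_nonneg hε (abs_nonneg _)).trans_lt (hA r₀))

theorem linearIndependent_col (hε : 0 ≤ ε) (hA : HasDominantMinor ε r₀ K A) :
    LinearIndependent R A.col :=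
  LinearIndependent.of_comp K.mulVecLin
    (linearIndependent_col_of_rowMinor_ne_zero (hA.rowMinor_ne_zero hε))

theorem mul_right (hA : HasDominantMinor ε r₀ K A) {g : Matrix m m R} (hg : g.det ≠ 0) :
    HasDominantMinor ε r₀ K (A * g) := by
  intro r
  rw [← Matrix.mul_assoc, rowMinor_mul, rowMinor_mul, abs_mul, abs_mul, ← mul_assoc]
  exact mul_lt_mul_of_pos_right (hA r) (abs_pos.2 hg)

theorem of_range_eq (hA : HasDominantMinor ε r₀ K A) {A' : Matrix n m R}
    (hA' : LinearIndependent R A'.col)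
    (hrange : LinearMap.range A'.mulVecLin = LinearMap.range A.mulVecLin) :
    HasDominantMinor ε r₀ K A' := by
  obtain ⟨g, rfl⟩ := exists_eq_mul_of_range_le hrange.le
  obtain ⟨r, hr⟩ := exists_rowMinor_ne_zero hA'
  rw [rowMinor_mul] at hr
  exact hA.mul_right (right_ne_zero_of_mul hr)

theorem exists_nat_abs_rowMinor_le {ε : ℚ} (hε : 0 < ε) {κ : Matrix n n ℚ}
    (hA : HasDominantMinor (ε : R) r₀ (κ.map Rat.cast) A) (r : m → n) :
    ∃ k : ℕ, |rowMinor (κ.map (Rat.cast : ℚ → R) * A) r| ≤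
      k * |rowMinor (κ.map (Rat.cast : ℚ → R) * A) r₀| := by
  obtain ⟨k, hk⟩ := exists_nat_ge ((∏ i, ∑ l, |κ (r i) l|) * ε⁻¹)
  have hkR : (∏ i, ∑ l, |κ.map (Rat.cast : ℚ → R) (r i) l|) * (ε : R)⁻¹ ≤ k := by
    simpa only [map_apply] using mod_cast (Rat.cast_le (K := R)).2 hk
  have hminor : ∀ f, |rowMinor A f| ≤
      (ε : R)⁻¹ * |rowMinor (κ.map (Rat.cast : ℚ → R) * A) r₀| := fun f =>
    (le_inv_mul_iff₀ (Rat.cast_pos.2 hε)).2 (hA f).le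
  refine ⟨k, (abs_rowMinor_mul_le _ hminor r).trans ?_⟩
  rw [← mul_assoc]
  exact mul_le_mul_of_nonneg_right hkR (abs_nonneg _)

end HasDominantMinor

end HasDominantMinor

section Monomial

variable {n S : Type*} [DecidableEq n] [CommRing S]

/-- `P` is a monomial matrix with permutation `σ`: its row `a` has a single nonzero entry, in
column `σ a`. -/
def IsMonomialAlong (σ : Equiv.Perm n) (P : Matrix n n S) : Prop :=
  ∃ w : n → S, (∀ a, w a ≠ 0) ∧ ∀ a, P.row a = Pi.single (σ a) (w a)

namespace IsMonomialAlong

theorem one [Nontrivial S] : IsMonomialAlong 1 (1 : Matrix n n S) :=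
  ⟨1, fun _ => one_ne_zero, fun a => funext fun b => by
    simp [one_apply, Pi.single_apply, eq_comm]⟩

theorem mul [Fintype n] [NoZeroDivisors S] {σ τ : Equiv.Perm n} {P Q : Matrix n n S}
    (hP : IsMonomialAlong σ P) (hQ : IsMonomialAlong τ Q) : IsMonomialAlong (τ * σ) (P * Q) := by
  obtain ⟨v, hv, hP⟩ := hP
  obtain ⟨w, hw, hQ⟩ := hQ
  refine ⟨fun a => v a * w (σ a), fun a => mul_ne_zero (hv a) (hw _), fun a => ?_⟩
  calc (P * Q).row a
      = P.row a ᵥ* Q := mul_apply_eq_vecMul P Q a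
    _ = v a • Q.row (σ a) := by rw [hP, single_vecMul]
    _ = Pi.single ((τ * σ) a) (v a * w (σ a)) := by
        rw [hQ, ← Pi.single_smul, smul_eq_mul, Equiv.Perm.mul_apply]

theorem exists_rowMinor_map_mul_eq [Fintype n] [IsDomain S] {m T : Type*} [Fintype m]
    [DecidableEq m] [CommRing T] (φ : S →+* T) {σ : Equiv.Perm n} {P : Matrix n n S}
    (hP : IsMonomialAlong σ P) (r : m → n) :
    ∃ c : S, c ≠ 0 ∧ ∀ A : Matrix n m T,
      rowMinor (P.map φ * A) r = φ c * rowMinor A (σ ∘ r) := by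
  obtain ⟨w, hw, hP⟩ := hP
  refine ⟨∏ i, w (r i), Finset.prod_ne_zero_iff.2 fun i _ => hw (r i), fun A => ?_⟩
  have hmap : ∀ a, (P.map φ).row a = Pi.single (σ a) (φ (w a)) := fun a => funext fun b => by
    rw [row_apply, map_apply, ← row_apply P, hP, Pi.single_apply, Pi.single_apply, apply_ite φ,
      map_zero]
  have hrow : ∀ a, (P.map φ * A).row a = φ (w a) • A.row (σ a) := fun a => by
    rw [← single_vecMul, ← hmap]
    exact mul_apply_eq_vecMul _ A a
  rw [rowMinor, rowMinor, map_prod, ← det_mul_column]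
  exact congrArg det (ext_row fun i => hrow (r i))

end IsMonomialAlong

end Monomial

section ScaledReflection

variable {n S : Type*} [Fintype n] [DecidableEq n] [CommRing S]

/-- The Householder reflection in the hyperplane orthogonal to `u`, multiplied by `u ⬝ᵥ u` so
that its entries are polynomials in those of `u`. -/
def scaledReflection (u : n → S) : Matrix n n S :=
  (u ⬝ᵥ u) • (1 : Matrix n n S) - (2 : S) • vecMulVec u u

theorem scaledReflection_mul_transpose (u : n → S) :
    scaledReflection u * (scaledReflection u)ᵀ = (u ⬝ᵥ u) ^ 2 • (1 : Matrix n n S) := by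
  have hsq : vecMulVec u u * vecMulVec u u = (u ⬝ᵥ u) • vecMulVec u u := by
    rw [vecMulVec_mul_vecMulVec, vecMulVec_smul]
  simp only [scaledReflection, transpose_sub, transpose_smul, transpose_one, transpose_vecMulVec,
    Matrix.sub_mul, Matrix.mul_sub, Matrix.smul_mul, Matrix.mul_smul, Matrix.one_mul,
    Matrix.mul_one, hsq]
  module

theorem map_scaledReflection {T : Type*} [CommRing T] (φ : S →+* T) (u : n → S) :
    (scaledReflection u).map φ = scaledReflection (φ ∘ u) := by
  ext a b
  simp [scaledReflection, one_apply, vecMulVec_apply, RingHom.map_dotProduct, apply_ite φ,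
    map_ofNat]

theorem isMonomialAlong_scaledReflection_single [Nontrivial S] (x : n) :
    IsMonomialAlong 1 (scaledReflection (Pi.single x 1 : n → S)) := by
  refine ⟨fun a => if a = x then -1 else 1, fun a => ?_, fun a => funext fun b => ?_⟩
  · dsimp only
    split_ifs <;> simp
  · simp only [scaledReflection, single_dotProduct, Pi.single_eq_same, mul_one, one_smul, row_apply,
      Matrix.sub_apply, one_apply, Matrix.smul_apply, vecMulVec_apply, Pi.single_apply,
      smul_eq_mul, Equiv.Perm.one_apply]
    grind

theorem isMonomialAlong_scaledReflection_single_sub_single [NeZero (2 : S)] {x y : n}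
    (hxy : x ≠ y) :
    IsMonomialAlong (Equiv.swap x y)
      (scaledReflection (Pi.single x 1 - Pi.single y 1 : n → S)) := by
  refine ⟨fun _ => 2, fun _ => two_ne_zero, fun a => funext fun b => ?_⟩
  simp only [scaledReflection, sub_dotProduct, single_dotProduct, Pi.sub_apply, Pi.single_apply,
    row_apply, Matrix.sub_apply, one_apply, Matrix.smul_apply, vecMulVec_apply, smul_eq_mul,
    Equiv.swap_apply_def]
  grind

end ScaledReflection

section SimilitudeCurve

open Polynomial

variable {n ι K : Type*} [Fintype n] [DecidableEq n] [Field K] {t : ι → K}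

/-- There is a polynomial curve of orthogonal similitudes (of ratio `q`, possibly vanishing at some
points) which passes at each parameter `t i` through a monomial matrix with permutation `σ i`. -/
def ExistsSimilitudeCurve (t : ι → K) (σ : ι → Equiv.Perm n) : Prop :=
  ∃ (M : Matrix n n K[X]) (q : K[X]), q ≠ 0 ∧ M * Mᵀ = q ^ 2 • (1 : Matrix n n K[X]) ∧
    ∀ i, IsMonomialAlong (σ i) (M.map (evalRingHom (t i)))

theorem existsSimilitudeCurve_one (t : ι → K) :
    ExistsSimilitudeCurve t (1 : ι → Equiv.Perm n) :=
  ⟨1, 1, one_ne_zero, by simp, fun i => by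
    simpa using (IsMonomialAlong.one : IsMonomialAlong 1 (1 : Matrix n n K))⟩

theorem ExistsSimilitudeCurve.mul {σ τ : ι → Equiv.Perm n} (hσ : ExistsSimilitudeCurve t σ)
    (hτ : ExistsSimilitudeCurve t τ) : ExistsSimilitudeCurve t (σ * τ) := by
  obtain ⟨M, q, hq, hM, hMt⟩ := hσ
  obtain ⟨N, p, hp, hN, hNt⟩ := hτ
  refine ⟨N * M, p * q, mul_ne_zero hp hq, ?_, fun i => ?_⟩
  · calc N * M * (N * M)ᵀ
        = N * (M * Mᵀ) * Nᵀ := by simp only [transpose_mul, Matrix.mul_assoc]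
      _ = (p * q) ^ 2 • 1 := by
        rw [hM, Matrix.mul_smul, Matrix.mul_one, Matrix.smul_mul, hN, smul_smul, mul_pow, mul_comm]
  · rw [Matrix.map_mul]
    exact (hNt i).mul (hMt i)

/- The curve of reflections in `u(x)`, where `u(t i₀) = e_x - e_y` gives the transposition and
`u(t i) = e_x` for `i ≠ i₀` gives a diagonal matrix. -/
theorem existsSimilitudeCurve_mulSingle_swap [NeZero (2 : K)] [Finite ι] [DecidableEq ι]
    (ht : Function.Injective t) (i₀ : ι) {x y : n} (hxy : x ≠ y) :
    ExistsSimilitudeCurve t (Pi.mulSingle i₀ (Equiv.swap x y)) := by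
  let v : ι → n → K := fun i =>
    if i = i₀ then Pi.single x 1 - Pi.single y 1 else Pi.single x 1
  have hinterp : ∀ a, ∃ p : K[X], ∀ i, p.eval (t i) = v i a := fun a =>
    (exists_eval_eq_iff _ _).2 fun i j hij => by rw [ht hij]
  choose u hu using hinterp
  have huv : ∀ i, evalRingHom (t i) ∘ u = v i := fun i => funext fun a => hu a i
  refine ⟨scaledReflection u, u ⬝ᵥ u, fun hq => ?_, scaledReflection_mul_transpose u, fun i => ?_⟩
  · have hv : v i₀ ⬝ᵥ v i₀ = 0 := by
      rw [← huv, ← RingHom.map_dotProduct, hq, map_zero]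
    refine two_ne_zero (α := K) ?_
    rw [← hv]
    simp [v, hxy, hxy.symm, one_add_one_eq_two]
  · rw [map_scaledReflection, huv]
    by_cases hi : i = i₀
    · subst hi
      simpa [v] using isMonomialAlong_scaledReflection_single_sub_single hxy
    · simpa [v, hi] using isMonomialAlong_scaledReflection_single x

theorem existsSimilitudeCurve [NeZero (2 : K)] [Finite ι] (ht : Function.Injective t)
    (σ : ι → Equiv.Perm n) : ExistsSimilitudeCurve t σ := by
  classical
  let H : Submonoid (ι → Equiv.Perm n) :=
    { carrier := {σ | ExistsSimilitudeCurve t σ}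
      mul_mem' := ExistsSimilitudeCurve.mul
      one_mem' := existsSimilitudeCurve_one t }
  have hH : ∀ (i : ι) (τ : Equiv.Perm n), Pi.mulSingle i τ ∈ H := by
    intro i τ
    induction τ using Equiv.Perm.swap_induction_on with
    | one => rw [Pi.mulSingle_one]; exact H.one_mem
    | swap_mul f x y hxy ih =>
      rw [Pi.mulSingle_mul]
      exact H.mul_mem (existsSimilitudeCurve_mulSingle_swap ht i hxy) ih
  exact Submonoid.pi_mem_of_mulSingle_mem σ fun i => hH i (σ i)

end SimilitudeCurve

section Interpolation

open Polynomial

variable {m n K : Type*} [Fintype m] [DecidableEq m] [Fintype n] [Field K] {S : Finset K}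

theorem eval_eq_sum_eval_mul_eval_lagrangeBasis [DecidableEq K] {p : K[X]}
    (hp : p.natDegree < S.card) (t : K) :
    p.eval t = ∑ s ∈ S, p.eval s * (Lagrange.basis S id s).eval t := by
  have hdeg : p.degree < S.card := degree_le_natDegree.trans_lt (Nat.cast_lt.2 hp)
  conv_lhs => rw [Lagrange.eq_interpolate (injOn_id (S : Set K)) hdeg]
  simp only [Lagrange.interpolate_apply, eval_finsetSum, eval_mul, eval_C, id]

theorem rowMinor_map_eval_mul_eq_sum [DecidableEq K] {T : Type*} [CommRing T] (φ : K →+* T)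
    {M : Matrix n n K[X]} {e : ℕ} (hM : ∀ a b, (M a b).natDegree ≤ e)
    (hS : Fintype.card m * e < S.card) (A : Matrix n m T) (r : m → n) (t : K) :
    rowMinor ((M.map (evalRingHom t)).map φ * A) r =
      ∑ s ∈ S, φ ((Lagrange.basis S id s).eval t) *
        rowMinor ((M.map (evalRingHom s)).map φ * A) r := by
  have hexpand : ∀ x, rowMinor ((M.map (evalRingHom x)).map φ * A) r =
      ∑ f : m → n, φ ((∏ i, M (r i) (f i)).eval x) * rowMinor A f := fun x => by
    simp only [rowMinor_mul_eq_sum, map_apply, coe_evalRingHom, eval_prod, map_prod]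
  have hdeg : ∀ f : m → n, (∏ i, M (r i) (f i)).natDegree < S.card := fun f =>
    calc (∏ i, M (r i) (f i)).natDegree
        ≤ ∑ i, (M (r i) (f i)).natDegree := natDegree_prod_le _ _
      _ ≤ Fintype.card m * e := Finset.sum_le_card_nsmul _ _ _ fun i _ => hM _ _
      _ < S.card := hS
  simp only [hexpand, Finset.mul_sum]
  rw [Finset.sum_comm]
  refine Finset.sum_congr rfl fun f _ => ?_
  rw [eval_eq_sum_eval_mul_eval_lagrangeBasis (hdeg f) t, map_sum, Finset.sum_mul]
  refine Finset.sum_congr rfl fun s _ => ?_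
  rw [map_mul, mul_comm (φ _), mul_assoc]

end Interpolation

section Transversality

open Polynomial
open scoped Finset

variable {m n R : Type*} [Fintype m] [DecidableEq m] [Fintype n] [DecidableEq n]
variable [Field R] [LinearOrder R] [IsStrictOrderedRing R]

theorem eventually_mul_lt_nhdsGT_zero (C : ℚ) {b : ℚ} (hb : 0 < b) :
    ∀ᶠ ε : ℚ in 𝓝[>] 0, ε * C < b := by
  have hlim : Filter.Tendsto (fun ε : ℚ => ε * C) (𝓝[>] 0) (𝓝 (0 * C)) :=
    ((continuous_id.mul continuous_const).tendsto 0).mono_left nhdsWithin_le_nhds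
  rw [zero_mul] at hlim
  exact hlim.eventually (gt_mem_nhds hb)

/- If no `s ∈ S` worked, all interpolation nodes of the polynomial `x ↦ rowMinor (M(x) * A) r₀`
would be smaller than `ε D`, with `D` the largest minor of `A`; but its value at `t` is a fixed
nonzero multiple of `D`. -/
theorem eventually_exists_hasDominantMinor {M : Matrix n n ℚ[X]} {e : ℕ}
    (hM : ∀ a b, (M a b).natDegree ≤ e) {S : Finset ℚ} (hS : Fintype.card m * e < #S)
    {t : ℚ} {σ : Equiv.Perm n} (hσ : IsMonomialAlong σ (M.map (evalRingHom t))) (r₀ : m → n) :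
    ∀ᶠ ε : ℚ in 𝓝[>] 0, ∀ A : Matrix n m R, rowMinor A (σ ∘ r₀) ≠ 0 →
      (∀ f, |rowMinor A f| ≤ |rowMinor A (σ ∘ r₀)|) →
      ∃ s ∈ S, HasDominantMinor (ε : R) r₀ ((M.map (evalRingHom s)).map Rat.cast) A := by
  obtain ⟨c, hc, hct⟩ := hσ.exists_rowMinor_map_mul_eq (Rat.castHom R) r₀
  let B : ℚ → ℚ := fun s => (Lagrange.basis S id s).eval t
  filter_upwards [eventually_mul_lt_nhdsGT_zero (∑ s ∈ S, |B s|) (abs_pos.2 hc),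
    self_mem_nhdsWithin] with ε hεB hε A hA hmax
  have hε' : (0 : R) ≤ ε := Rat.cast_nonneg.2 (le_of_lt hε)
  set D := |rowMinor A (σ ∘ r₀)|
  by_contra! hsmall
  have hnode : ∀ s ∈ S,
      |rowMinor ((M.map (evalRingHom s)).map (Rat.castHom R) * A) r₀| ≤ ε * D := by
    intro s hs
    obtain ⟨r, hr⟩ : ∃ r, _ ≤ _ := by simpa [HasDominantMinor] using hsmall s hs
    exact hr.trans (mul_le_mul_of_nonneg_left (hmax r) hε')
  have hlt : (ε : R) * (∑ s ∈ S, |(B s : R)|) * D < |(c : R)| * D :=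
    mul_lt_mul_of_pos_right (mod_cast (Rat.cast_lt (K := R)).2 hεB) (abs_pos.2 hA)
  refine hlt.not_ge ?_
  calc |(c : R)| * D
      = |rowMinor ((M.map (evalRingHom t)).map (Rat.castHom R) * A) r₀| := by
        rw [hct, abs_mul, Rat.coe_castHom]
    _ ≤ ∑ s ∈ S, |(B s : R)| *
          |rowMinor ((M.map (evalRingHom s)).map (Rat.castHom R) * A) r₀| := by
        rw [rowMinor_map_eval_mul_eq_sum (Rat.castHom R) hM hS]
        exact (Finset.abs_sum_le_sum_abs _ _).trans_eq (by simp only [abs_mul]; rfl)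
    _ ≤ ∑ s ∈ S, |(B s : R)| * (ε * D) :=
        Finset.sum_le_sum fun s hs => mul_le_mul_of_nonneg_left (hnode s hs) (abs_nonneg _)
    _ = ε * (∑ s ∈ S, |(B s : R)|) * D := by rw [← Finset.sum_mul]; ring

theorem eventually_card_not_hasDominantMinor_le {M : Matrix n n ℚ[X]} {e : ℕ}
    (hM : ∀ a b, (M a b).natDegree ≤ e) {t : Equiv.Perm n → ℚ}
    (hMt : ∀ σ, IsMonomialAlong σ (M.map (evalRingHom (t σ)))) {r₀ : m → n}
    (hr₀ : Function.Injective r₀) (T : Finset ℚ) :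
    ∀ᶠ ε : ℚ in 𝓝[>] 0, ∀ A : Matrix n m R, LinearIndependent R A.col →
      #{s ∈ T | ¬HasDominantMinor (ε : R) r₀ ((M.map (evalRingHom s)).map Rat.cast) A} ≤
        Fintype.card m * e := by
  have hall : ∀ S ∈ T.powerset, ∀ᶠ ε : ℚ in 𝓝[>] 0, ∀ σ : Equiv.Perm n,
      Fintype.card m * e < #S → ∀ A : Matrix n m R, rowMinor A (σ ∘ r₀) ≠ 0 →
        (∀ f, |rowMinor A f| ≤ |rowMinor A (σ ∘ r₀)|) →
        ∃ s ∈ S, HasDominantMinor (ε : R) r₀ ((M.map (evalRingHom s)).map Rat.cast) A :=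
    fun S _ => Filter.eventually_all.2 fun σ => Filter.eventually_imp_distrib_left.2 fun hS =>
      eventually_exists_hasDominantMinor hM hS (hMt σ) r₀
  filter_upwards [(Filter.eventually_all_finset _).2 hall] with ε hε A hA
  by_contra! hcard
  obtain ⟨r, hr, hmax⟩ := exists_rowMinor_ne_zero_forall_abs_le hA
  obtain ⟨σ, hσ⟩ := Equiv.Perm.exists_extending_pair r₀ r hr₀ (injective_of_rowMinor_ne_zero hr)
  obtain rfl : σ ∘ r₀ = r := funext hσ
  obtain ⟨s, hs, hdom⟩ := hε _ (Finset.mem_powerset.2 (Finset.filter_subset _ _)) σ hcard A hr hmax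
  exact (Finset.mem_filter.1 hs).2 hdom

variable (R) in
theorem exists_similitudes_card_not_hasDominantMinor_le (n : ℕ) :
    ∃ m : ℕ, ∀ N : ℕ, ∃ (F : Fin N → Matrix (Fin n) (Fin n) ℚ) (ε : ℚ), 0 < ε ∧
      (∀ k, ∃ c : ℚ, c ≠ 0 ∧ F k * (F k)ᵀ = c ^ 2 • (1 : Matrix (Fin n) (Fin n) ℚ)) ∧
      ∀ (d : ℕ) (h : d ≤ n) (A : Matrix (Fin n) (Fin d) R), LinearIndependent R A.col →
        #{k | ¬HasDominantMinor (ε : R) (Fin.castLE h) ((F k).map Rat.cast) A} ≤ m := by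
  let t : Equiv.Perm (Fin n) → ℚ := fun σ => (Fintype.equivFin _ σ : ℕ)
  have ht : Function.Injective t :=
    Nat.cast_injective.comp (Fin.val_injective.comp (Equiv.injective _))
  obtain ⟨M, q, hq, hM, hMt⟩ := existsSimilitudeCurve ht id
  obtain ⟨e, he⟩ : ∃ e, ∀ a b, (M a b).natDegree ≤ e :=
    ⟨Finset.univ.sup fun p : Fin n × Fin n => (M p.1 p.2).natDegree, fun a b =>
      Finset.le_sup (f := fun p : Fin n × Fin n => (M p.1 p.2).natDegree)
        (Finset.mem_univ (a, b))⟩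
  refine ⟨n * e, fun N => ?_⟩
  have hinf : {x | q.IsRoot x}ᶜ.Infinite := (finite_setOfPred_isRoot hq).infinite_compl
  obtain ⟨T, hTq, hT⟩ := hinf.exists_subset_card_eq N
  let s : Fin N ≃ T := (T.equivFinOfCardEq hT).symm
  have hall : ∀ d : Fin (n + 1), ∀ᶠ ε : ℚ in 𝓝[>] 0, ∀ A : Matrix (Fin n) (Fin d) R,
      LinearIndependent R A.col →
      #{x ∈ T | ¬HasDominantMinor (ε : R) (Fin.castLE d.is_le)
        ((M.map (evalRingHom x)).map Rat.cast) A} ≤ Fintype.card (Fin d) * e := fun d =>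
    eventually_card_not_hasDominantMinor_le he hMt (Fin.castLE_injective d.is_le) T
  obtain ⟨ε, hε, hεpos⟩ := ((Filter.eventually_all.2 hall).and self_mem_nhdsWithin).exists
  refine ⟨fun k => M.map (evalRingHom (s k : ℚ)), ε, hεpos, fun k =>
    ⟨q.eval (s k : ℚ), hTq (s k).2, ?_⟩, fun d h A hA => ?_⟩
  · rw [← transpose_map, ← Matrix.map_mul, hM, Matrix.map_smul' _ _ _ (map_mul _),
      Matrix.map_one _ (map_zero _) (map_one _), map_pow, coe_evalRingHom]
  · refine le_trans ?_ ((hε ⟨d, Nat.lt_succ_of_le h⟩ A hA).trans ?_)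
    · refine Finset.card_le_card_of_injOn (fun k => (s k : ℚ)) (fun k hk => ?_)
        (Subtype.val_injective.comp s.injective).injOn
      exact Finset.mem_filter.2 ⟨(s k).2, (Finset.mem_filter.1 hk).2⟩
    · rw [Fintype.card_fin]
      exact Nat.mul_le_mul_right _ h

end Transversality

theorem exists_linearIndependent_col_range_mulVecLin_eq {n K : Type*} [Finite n] [Field K]
    {d : ℕ} {W : Submodule K (n → K)} (hW : Module.finrank K W = d) :
    ∃ A : Matrix n (Fin d) K, LinearIndependent K A.col ∧ LinearMap.range A.mulVecLin = W := by
  let b : Module.Basis (Fin d) K W := Module.finBasisOfFinrankEq K W hW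
  refine ⟨of fun i j => (b j : n → K) i, b.linearIndependent.map' W.subtype W.ker_subtype, ?_⟩
  calc LinearMap.range (of fun i j => (b j : n → K) i).mulVecLin
      = Submodule.span K (range (W.subtype ∘ b)) := range_mulVecLin _
    _ = W := by
        rw [range_comp, ← Submodule.map_span, b.span_eq, Submodule.map_top,
          Submodule.range_subtype]

section TransverseSubspaces

open scoped Finset

variable {ι m n R : Type*} [Fintype m] [DecidableEq m] [Fintype n]
variable [Field R] [LinearOrder R]
variable {ε : ℚ} {F : ι → Matrix n n ℚ} {S : Finset ι} {W : Submodule R (n → R)}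

variable (R) in
/-- The subspaces spanned by the columns of a matrix `A` for which all the matrices `F k * A`,
`k ∈ S`, have a dominant minor on the rows `r₀`. These are the sets `Θ_ν^d`, with `S` playing the
role of the index `ν`. -/
def transverseSubspaces (ε : ℚ) (r₀ : m → n) (F : ι → Matrix n n ℚ) (S : Finset ι) :
    Set (Submodule R (n → R)) :=
  {W | ∃ A : Matrix n m R, (∀ k ∈ S, HasDominantMinor (ε : R) r₀ ((F k).map Rat.cast) A) ∧
    LinearMap.range A.mulVecLin = W}

theorem exists_card_compl_le_mem_transverseSubspaces [Fintype ι] [DecidableEq ι] {d m : ℕ}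
    {r₀ : Fin d → n} (hbad : ∀ A : Matrix n (Fin d) R, LinearIndependent R A.col →
      #{k | ¬HasDominantMinor (ε : R) r₀ ((F k).map Rat.cast) A} ≤ m)
    (hW : Module.finrank R W = d) :
    ∃ S : Finset ι, #Sᶜ ≤ m ∧ W ∈ transverseSubspaces R ε r₀ F S := by
  obtain ⟨A, hA, hAW⟩ := exists_linearIndependent_col_range_mulVecLin_eq hW
  refine ⟨Finset.univ.filter fun k => HasDominantMinor (ε : R) r₀ ((F k).map Rat.cast) A, ?_, A,
    fun k hk => (Finset.mem_filter.1 hk).2, hAW⟩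
  rw [Finset.compl_filter]
  exact hbad A hA

variable [IsStrictOrderedRing R]

theorem finrank_of_mem_transverseSubspaces {r₀ : m → n} (hε : 0 ≤ ε) (hS : S.Nonempty)
    (hW : W ∈ transverseSubspaces R ε r₀ F S) : Module.finrank R W = Fintype.card m := by
  obtain ⟨A, hA, rfl⟩ := hW
  obtain ⟨k, hk⟩ := hS
  rw [range_mulVecLin]
  exact finrank_span_eq_card ((hA k hk).linearIndependent_col (Rat.cast_nonneg.2 hε))

theorem grassRep_transverseSubspaces {n d : ℕ} {F : ι → Matrix (Fin n) (Fin n) ℚ}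
    (hε : 0 ≤ ε) (r₀ : Fin d → Fin n) (hS : S.Nonempty) :
    (grassRep (transverseSubspaces R ε r₀ F S) : Set (Fin n × Fin d → R)) = ⋂ k ∈ S, {v |
      HasDominantMinor (ε : R) r₀ ((F k).map Rat.cast) (of fun i j => v (i, j))} := by
  ext v
  simp only [mem_iInter]
  constructor
  · rintro ⟨hv, A, hA, hrange⟩ k hk
    exact (hA k hk).of_range_eq hv ((range_mulVecLin _).trans hrange.symm)
  · intro hv
    obtain ⟨k, hk⟩ := hS
    exact ⟨(hv k hk).linearIndependent_col (Rat.cast_nonneg.2 hε), _, hv, range_mulVecLin _⟩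

theorem isOpen_grassRep_transverseSubspaces [TopologicalSpace R] [OrderTopology R] {n d : ℕ}
    {F : ι → Matrix (Fin n) (Fin n) ℚ} (hε : 0 ≤ ε) (r₀ : Fin d → Fin n) (hS : S.Nonempty) :
    IsOpen (grassRep (transverseSubspaces R ε r₀ F S) : Set (Fin n × Fin d → R)) := by
  rw [grassRep_transverseSubspaces hε r₀ hS]
  exact isOpen_biInter_finset fun k _ => isOpen_hasDominantMinor _ _ _

theorem definable_grassRep_transverseSubspaces {L : FirstOrder.Language} [L.Structure R]
    (hring : ExpandsOrderedRing (R := R) L) {n d : ℕ} {F : ι → Matrix (Fin n) (Fin n) ℚ}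
    (hε : 0 ≤ ε) (r₀ : Fin d → Fin n) (hS : S.Nonempty) :
    (∅ : Set R).Definable L
      (grassRep (transverseSubspaces R ε r₀ F S) : Set (Fin n × Fin d → R)) := by
  rw [grassRep_transverseSubspaces hε r₀ hS]
  exact definable_biInter_finset (fun k => definable_hasDominantMinor hring _ _ _) S

theorem jBounded_map_of_mem_transverseSubspaces {O : Set R}
    (hO : ∀ (k : ℕ) (x : R), |x| ≤ k → x ∈ O) {n d : ℕ} (h : d ≤ n)
    {F : ι → Matrix (Fin n) (Fin n) ℚ} (hε : 0 < ε) {W : Submodule R (Fin n → R)}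
    (hW : W ∈ transverseSubspaces R ε (Fin.castLE h) F S) {k : ι} (hk : k ∈ S) :
    JBounded O d h (W.map ((F k).map Rat.cast).mulVecLin) := by
  obtain ⟨A, hA, rfl⟩ := hW
  have hne := (hA k hk).rowMinor_ne_zero (Rat.cast_nonneg.2 hε.le)
  rw [← LinearMap.range_comp, ← mulVecLin_mul]
  refine jBounded_range_mulVecLin h hne fun r => ?_
  obtain ⟨j, hj⟩ := (hA k hk).exists_nat_abs_rowMinor_le hε r
  refine hO j _ ?_
  rw [abs_div]
  exact div_le_of_le_mul₀ (abs_nonneg _) j.cast_nonneg hj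

end TransverseSubspaces

section Similitude

variable {n K R : Type*} [Fintype n] [DecidableEq n] [Field K] [Field R]

theorem exists_orthogonal_forall_map_mulVecLin_eq (φ : K →+* R) {M : Matrix n n K} {c : K}
    (hc : c ≠ 0) (hM : M * Mᵀ = c ^ 2 • (1 : Matrix n n K)) :
    ∃ κ : Matrix n n K, κ * κᵀ = 1 ∧ κᵀ * κ = 1 ∧
      ∀ W : Submodule R (n → R), W.map (κ.map φ).mulVecLin = W.map (M.map φ).mulVecLin := by
  have hκ : (c⁻¹ • M) * (c⁻¹ • M)ᵀ = 1 := by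
    rw [transpose_smul, smul_mul_smul_comm, hM, smul_smul]
    field_simp
    exact one_smul _ _
  refine ⟨c⁻¹ • M, hκ, mul_eq_one_comm.1 hκ, fun W => ?_⟩
  have hsmul : ((c⁻¹ • M).map φ).mulVecLin = φ c⁻¹ • (M.map φ).mulVecLin := by
    rw [Matrix.map_smul' _ _ _ (map_mul φ)]
    exact LinearMap.ext fun x => smul_mulVec _ _ x
  rw [hsmul, Submodule.map_smul _ _ _ ((map_ne_zero φ).2 (inv_ne_zero hc))]

end Similitude

section Covering

open scoped Finset

theorem exists_forall_mem_of_card_compl_le {ι α : Type*} [Fintype ι] [Fintype α] [DecidableEq α]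
    {S : ι → Finset α} {m : ℕ} (hS : ∀ i, #(S i)ᶜ ≤ m)
    (hm : Fintype.card ι * m < Fintype.card α) : ∃ k, ∀ i, k ∈ S i := by
  have hcard : #(Finset.univ.biUnion fun i => (S i)ᶜ) < Fintype.card α :=
    (Finset.card_biUnion_le_card_mul _ _ _ fun i _ => hS i).trans_lt hm
  obtain ⟨k, hk⟩ := Finset.exists_mem_notMem_of_card_lt_card (hcard.trans_eq Finset.card_univ.symm)
  exact ⟨k, by simpa using hk.2⟩

end Covering

end GrassmannianCovering

open LipStrat GrassmannianCovering Finset in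
theorem grassmannian_covering_general
    {R : Type*} [Field R] [LinearOrder R] [IsStrictOrderedRing R]
    [TopologicalSpace R] [OrderTopology R]
    (L : FirstOrder.Language) [L.Structure R] (hring : ExpandsOrderedRing (R := R) L)
    (O : Set R) (hO : ∀ (k : ℕ) (x : R), |x| ≤ k → x ∈ O) (n ℓ : ℕ) :
    ∃ (K : ℕ → ℕ) (Θ : (d : ℕ) → Fin (K d) → Set (Submodule R (Fin n → R))),
      (∀ d : ℕ, d ≤ n → ∀ ν : Fin (K d),
        (∀ W ∈ Θ d ν, Module.finrank R W = d) ∧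
        IsOpen (grassRep (Θ d ν) : Set ((Fin n × Fin d) → R)) ∧
        Set.Definable (∅ : Set R) L (grassRep (Θ d ν) : Set ((Fin n × Fin d) → R))) ∧
      (∀ d : ℕ, d ≤ n → ∀ W : Submodule R (Fin n → R), Module.finrank R W = d →
        ∃ ν : Fin (K d), W ∈ Θ d ν) ∧
      (∀ (dd : Fin ℓ → ℕ) (hdd : ∀ i, dd i ≤ n) (νν : (i : Fin ℓ) → Fin (K (dd i))),
        ∃ κ : Matrix (Fin n) (Fin n) ℚ, κ * κ.transpose = 1 ∧ κ.transpose * κ = 1 ∧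
          ∀ i : Fin ℓ, ∀ W ∈ Θ (dd i) (νν i),
            JBounded O (dd i) (hdd i)
              (Submodule.map (Matrix.mulVecLin (κ.map (fun q : ℚ => (q : R)))) W)) := by
  obtain ⟨m, hm⟩ := exists_similitudes_card_not_hasDominantMinor_le R n
  obtain ⟨F, ε, hε, hF, hbad⟩ := hm (ℓ * m + m + 1)
  let I := {S : Finset (Fin (ℓ * m + m + 1)) // #Sᶜ ≤ m}
  let S : Fin (Fintype.card I) ≃ I := (Fintype.equivFin I).symm
  have hS : ∀ ν, (S ν).1.Nonempty := fun ν => Finset.nonempty_iff_ne_empty.2 fun hempty => by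
    have hle := (S ν).2
    rw [hempty, Finset.compl_empty, Finset.card_univ, Fintype.card_fin] at hle
    lia
  let Θ : (d : ℕ) → Fin (Fintype.card I) → Set (Submodule R (Fin n → R)) := fun d ν =>
    {W | ∃ h : d ≤ n, W ∈ transverseSubspaces R ε (Fin.castLE h) F (S ν).1}
  have hΘ : ∀ d (h : d ≤ n) ν, Θ d ν = transverseSubspaces R ε (Fin.castLE h) F (S ν).1 :=
    fun d h ν => by simp [Θ, h]
  refine ⟨fun _ => Fintype.card I, Θ, fun d h ν => ?_, fun d h W hW => ?_, fun dd hdd νν => ?_⟩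
  · rw [hΘ d h]
    exact ⟨fun W hW => by
        rw [finrank_of_mem_transverseSubspaces hε.le (hS ν) hW, Fintype.card_fin],
      isOpen_grassRep_transverseSubspaces hε.le _ (hS ν),
      definable_grassRep_transverseSubspaces hring hε.le _ (hS ν)⟩
  · obtain ⟨T, hT, hWT⟩ := exists_card_compl_le_mem_transverseSubspaces (hbad d h) hW
    obtain ⟨ν, hν⟩ := S.surjective ⟨T, hT⟩
    exact ⟨ν, h, by rwa [hν]⟩
  · obtain ⟨k, hk⟩ := exists_forall_mem_of_card_compl_le (fun i => (S (νν i)).2) (by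
      rw [Fintype.card_fin, Fintype.card_fin]; lia)
    obtain ⟨c, hc, hFk⟩ := hF k
    obtain ⟨κ, hκ, hκ', hmap⟩ := exists_orthogonal_forall_map_mulVecLin_eq (Rat.castHom R) hc hFk
    refine ⟨κ, hκ, hκ', fun i W hW => ?_⟩
    rw [hΘ _ (hdd i)] at hW
    exact (hmap W).symm ▸ jBounded_map_of_mem_transverseSubspaces hO (hdd i) hε hW (hk i)

open LipStrat in
/-- Lemma 3.8, coverings of the Grassmannians. For fixed `n` and `ℓ`
there are finite open `L`-definable coverings `(Θ_ν^d)_ν` of the Grassmannians `Gr_{n,d}(R)`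
(`d ≤ n`) such that for any `ℓ` of these sets there is a rational orthogonal matrix
`κ ∈ O_n(ℚ)` with `v(J(κ V)) ≥ 0` for every `V` in each of the chosen sets. -/
theorem grassmannian_covering
    {R : Type*} [Field R] [LinearOrder R] [IsStrictOrderedRing R] [LipStrat.IsRealClosed R]
    [TopologicalSpace R] [OrderTopology R]
    (L : FirstOrder.Language) [L.Structure R]
    (hring : ExpandsOrderedRing (R := R) L)
    (homin : IsOMinimal (R := R) L)
    (hpb : IsPowerBounded (R := R) L)
    (R₀ : L.ElementarySubstructure R) (hproper : (R₀ : Set R) ≠ Set.univ)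
    (O : Set R) (hO : O = convexClosure (R₀ : Set R))
    (n ℓ : ℕ) :
    ∃ (K : ℕ → ℕ) (Θ : (d : ℕ) → Fin (K d) → Set (Submodule R (Fin n → R))),
      -- each `Θ_ν^d` is an open `L`-definable set of `d`-dimensional subspaces
      (∀ d : ℕ, d ≤ n → ∀ ν : Fin (K d),
        (∀ W ∈ Θ d ν, Module.finrank R W = d) ∧
        IsOpen (grassRep (Θ d ν) : Set ((Fin n × Fin d) → R)) ∧
        Set.Definable (∅ : Set R) L (grassRep (Θ d ν) : Set ((Fin n × Fin d) → R))) ∧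
      -- the `Θ_ν^d` cover `Gr_{n,d}(R)`
      (∀ d : ℕ, d ≤ n → ∀ W : Submodule R (Fin n → R), Module.finrank R W = d →
        ∃ ν : Fin (K d), W ∈ Θ d ν) ∧
      -- common rational orthogonal transformation for any `ℓ` choices
      (∀ (dd : Fin ℓ → ℕ) (hdd : ∀ i, dd i ≤ n) (νν : (i : Fin ℓ) → Fin (K (dd i))),
        ∃ κ : Matrix (Fin n) (Fin n) ℚ, κ * κ.transpose = 1 ∧ κ.transpose * κ = 1 ∧
          ∀ i : Fin ℓ, ∀ W ∈ Θ (dd i) (νν i),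
            JBounded O (dd i) (hdd i)
              (Submodule.map (Matrix.mulVecLin (κ.map (fun q : ℚ => (q : R)))) W)) := by
  subst hO
  exact grassmannian_covering_general L hring _
    (fun _ _ => hring.mem_convexClosure_of_abs_le_natCast R₀) n ℓ
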